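/- Suppose a is contained in the Jacobson radical of R and cd(a,M) = ara(a,M). Then the following are equivalent: (i) M is a-relative generalized Cohen-Macaulay; (ii) there exists a natural number ℓ such that every a-relative system of parameters of M is an a^ℓ-weak sequence on M. -/

import Mathlib

/-!
Formalization of a statement from "A theory of relative generalized Cohen-Macaulay modules"
by Divaani-Aazar, Ghanbari Doust, Tousi and Zakeri.

Throughout, `R` is a commutative Noetherian ring and `M` a finitely generated `R`-module.
Conventions used below:
* `locH I i M` is the local cohomology module `H^i_I(M)` (Mathlib's `localCohomology`).
* Conditions `cd(I,M) = c`, `ara(I,M) = n`, `f_I(M) = f`, `grade(I,M) = r` are expressed by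
  the predicates `IsCd`, `IsAra`, `IsFinDim`, `IsGrade`.
* Sequences are given as functions `Fin r → R`; `pSpan M x i = ⟨x_0,…,x_{i-1}⟩M`.
* Koszul (co)homology is defined via the explicit (co)chain complex on the `p`-element
  subsets of `{0,…,n-1}`, and the canonical map `λ^i` into local cohomology is the structure
  map (at exponent 1) into the direct limit of Koszul cohomologies of powers of the sequence,
  which is the realization of `H^i_{⟨x⟩}(M)` used in the paper (2.1(iv)).
-/

open CategoryTheory

noncomputable section

variable {R : Type} [CommRing R]

/-! ### Sequences: prefix spans, weak sequences, filter regular sequences, d-sequences -/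

/-- `pSpan M x i` is the submodule `⟨x_0, …, x_{i-1}⟩M` of `M`. -/
def pSpan (M : Type) [AddCommGroup M] [Module R M] {r : ℕ} (x : Fin r → R) (i : Fin r) :
    Submodule R M :=
  Ideal.span (x '' {j | j < i}) • (⊤ : Submodule R M)

/-- `x_1, …, x_r` is an `I`-weak sequence on `M`:
`(⟨x_1,…,x_{i-1}⟩M :_M x_i) ⊆ (⟨x_1,…,x_{i-1}⟩M :_M I)` for all `i`. -/
def IsWeakSeq (I : Ideal R) (M : Type) [AddCommGroup M] [Module R M] {r : ℕ}
    (x : Fin r → R) : Prop :=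
  ∀ i : Fin r, ∀ m : M, x i • m ∈ pSpan M x i → ∀ a ∈ I, a • m ∈ pSpan M x i

/-- `x_1, …, x_r` is an `I`-filter regular sequence on `M`:
`(⟨x_1,…,x_{i-1}⟩M :_M x_i) ⊆ ⋃ₜ (⟨x_1,…,x_{i-1}⟩M :_M I^t)` for all `i`. -/
def IsFilterRegSeq (I : Ideal R) (M : Type) [AddCommGroup M] [Module R M] {r : ℕ}
    (x : Fin r → R) : Prop :=
  ∀ i : Fin r, ∀ m : M, x i • m ∈ pSpan M x i →
    ∃ t : ℕ, ∀ a ∈ I ^ t, a • m ∈ pSpan M x i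

/-- An unconditioned `I`-filter regular sequence: filter regular in any order. -/
def IsUncondFilterRegSeq (I : Ideal R) (M : Type) [AddCommGroup M] [Module R M] {r : ℕ}
    (x : Fin r → R) : Prop :=
  ∀ σ : Equiv.Perm (Fin r), IsFilterRegSeq I M (x ∘ σ)

/-- An unconditioned `I`-weak sequence: all positive powers, in any order, form an
`I`-weak sequence. -/
def IsUncondWeakSeq (I : Ideal R) (M : Type) [AddCommGroup M] [Module R M] {r : ℕ}
    (x : Fin r → R) : Prop :=
  ∀ σ : Equiv.Perm (Fin r), ∀ α : Fin r → ℕ, (∀ k, 0 < α k) →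
    IsWeakSeq I M fun k => x (σ k) ^ α k

/-- `x_1, …, x_r` is a d-sequence on `M`:
`(⟨x_1,…,x_{i-1}⟩M :_M x_i x_j) = (⟨x_1,…,x_{i-1}⟩M :_M x_j)` for all `i ≤ j`. -/
def IsDSeq (M : Type) [AddCommGroup M] [Module R M] {r : ℕ} (x : Fin r → R) : Prop :=
  ∀ i j : Fin r, i ≤ j → ∀ m : M,
    ((x i * x j) • m ∈ pSpan M x i ↔ x j • m ∈ pSpan M x i)

/-- An u.s.d-sequence on `M`: all positive powers, in any order, form a d-sequence. -/
def IsUSDSeq (M : Type) [AddCommGroup M] [Module R M] {r : ℕ} (x : Fin r → R) : Prop :=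
  ∀ σ : Equiv.Perm (Fin r), ∀ α : Fin r → ℕ, (∀ k, 0 < α k) →
    IsDSeq M fun k => x (σ k) ^ α k

/-! ### Local cohomology, cohomological dimension, arithmetic rank -/

/-- The `i`-th local cohomology module `H^i_I(M)`. -/
abbrev locH (I : Ideal R) (i : ℕ) (M : Type) [AddCommGroup M] [Module R M] : ModuleCat R :=
  (localCohomology I i).obj (ModuleCat.of R M)

/-- `cd(I, M) = c`: the cohomological dimension of `I` on `M` equals `c`, i.e.
`H^c_I(M) ≠ 0` and `H^i_I(M) = 0` for all `i > c`. -/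
def IsCd (I : Ideal R) (M : Type) [AddCommGroup M] [Module R M] (c : ℕ) : Prop :=
  Nontrivial (locH I c M) ∧ ∀ i : ℕ, c < i → Subsingleton (locH I i M)

/-- `f_I(M) = f`: the `I`-finiteness dimension of `M` equals `f`, i.e. `f` is the least
integer such that `H^f_I(M)` is not finitely generated. -/
def IsFinDim (I : Ideal R) (M : Type) [AddCommGroup M] [Module R M] (f : ℕ) : Prop :=
  (∀ i : ℕ, i < f → Module.Finite R (locH I i M)) ∧ ¬ Module.Finite R (locH I f M)

/-- `M` is `I`-relative generalized Cohen-Macaulay: `cd(I,M) ≤ 0` or `cd(I,M) = f_I(M)`. -/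
def IsRelGCM (I : Ideal R) (M : Type) [AddCommGroup M] [Module R M] : Prop :=
  (∀ i : ℕ, 0 < i → Subsingleton (locH I i M)) ∨
    ∃ c : ℕ, IsCd I M c ∧ IsFinDim I M c

/-- `ara(I, M) = n`: the arithmetic rank of `I` with respect to `M` equals `n`, i.e. `n` is the
least integer such that there are `x_1, …, x_n ∈ R` with
`Rad(⟨x_1,…,x_n⟩ + Ann M) = Rad(I + Ann M)`. -/
def IsAra (I : Ideal R) (M : Type) [AddCommGroup M] [Module R M] (n : ℕ) : Prop :=
  IsLeast {k : ℕ | ∃ x : Fin k → R,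
    (Ideal.span (Set.range x) + Module.annihilator R M).radical
      = (I + Module.annihilator R M).radical} n

/-- `x_1, …, x_c` is an `I`-relative system of parameters of `M` (where `c = cd(I,M)`):
the `x_i` lie in `I` and `Rad(⟨x_1,…,x_c⟩ + Ann M) = Rad(I + Ann M)`. -/
def IsRsop (I : Ideal R) (M : Type) [AddCommGroup M] [Module R M] {c : ℕ}
    (x : Fin c → R) : Prop :=
  (∀ j, x j ∈ I) ∧
    (Ideal.span (Set.range x) + Module.annihilator R M).radical
      = (I + Module.annihilator R M).radical

section PartA
open Opposite Limits

/-- The functor derived to obtain Ext. -/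
abbrev homF (Y : ModuleCat.{0} R) : ModuleCat.{0} R ⥤ (ModuleCat.{0} R)ᵒᵖ :=
  ((linearYoneda R (ModuleCat.{0} R)).obj Y).rightOp

/-- element as a morphism. -/
def elM (N : ModuleCat.{0} R) (z : N) : op N ⟶ op (ModuleCat.of R R) :=
  (ModuleCat.ofHom (LinearMap.toSpanSingleton R N z)).op

lemma elM_surj {N : ModuleCat.{0} R} (f : op N ⟶ op (ModuleCat.of R R)) :
    f = elM N (f.unop.hom (1 : R)) := by
  apply Quiver.Hom.unop_inj
  ext
  simp [elM]

lemma elM_apply {N : ModuleCat.{0} R} (z : N) : (elM N z).unop.hom (1 : R) = z := by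
  simp [elM]

lemma elM_inj {N : ModuleCat.{0} R} {z w : N} (h : elM N z = elM N w) : z = w := by
  rw [← elM_apply z, h, elM_apply]

lemma elM_comp {N N' : ModuleCat.{0} R} (f : N ⟶ N') (z : N) :
    f.op ≫ elM N z = elM N' (f.hom z) := by
  apply Quiver.Hom.unop_inj
  ext
  simp [elM]

lemma elM_add {N : ModuleCat.{0} R} (z w : N) : elM N (z + w) = elM N z + elM N w := by
  apply Quiver.Hom.unop_inj
  ext
  simp [elM]

lemma elM_zero {N : ModuleCat.{0} R} : elM N 0 = 0 := by
  apply Quiver.Hom.unop_inj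
  ext
  simp [elM]

variable {X : ModuleCat.{0} R} (P : ProjectiveResolution X) (Y : ModuleCat.{0} R) (n : ℕ)

abbrev homK : ChainComplex (ModuleCat.{0} R)ᵒᵖ ℕ :=
  ((homF Y).mapHomologicalComplex _).obj P.complex

abbrev extO (X : ModuleCat.{0} R) (Y : ModuleCat.{0} R) (n : ℕ) : ModuleCat.{0} R :=
  ((Ext R (ModuleCat.{0} R) n).obj (op X)).obj Y

variable {Y n}

def elHom (φ : P.complex.X n ⟶ Y) : (homK P Y).X n ⟶ op (ModuleCat.of R R) :=
  elM (ModuleCat.of R (P.complex.X n ⟶ Y)) φ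

lemma elHom_d (i j : ℕ) (φ : P.complex.X j ⟶ Y) :
    (homK P Y).d i j ≫ elHom P φ = elHom P (P.complex.d i j ≫ φ) := by
  exact elM_comp (((linearYoneda R (ModuleCat.{0} R)).obj Y).map (P.complex.d i j).op) φ

lemma elHom_zero  : elHom P (0 : P.complex.X n ⟶ Y) = 0 := elM_zero

lemma elHom_cocycle (φ : P.complex.X n ⟶ Y) (h : P.complex.d (n+1) n ≫ φ = 0) :
   (homK P Y).d (n+1) n ≫ elHom P φ = 0 := by
  rw [elHom_d, h, elHom_zero]

lemma elHom_surj (f : (homK P Y).X n ⟶ op (ModuleCat.of R R)) : ∃ φ, f = elHom P φ :=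
  ⟨_, elM_surj (N := ModuleCat.of R (P.complex.X n ⟶ Y)) f⟩

lemma elHom_inj {φ ψ : P.complex.X n ⟶ Y} (h : elHom P φ = elHom P ψ) : φ = ψ :=
  elM_inj h

def isoD (P : ProjectiveResolution X) (Y : ModuleCat.{0} R) (n : ℕ) :
    op (extO X Y n) ≅ (homK P Y).homology n :=
  P.isoLeftDerivedObj (homF Y) n

lemma mono_homι : Mono ((homK P Y).homologyι n) := by
  unfold HomologicalComplex.homologyι
  exact ShortComplex.instMonoHomologyι _

lemma isoD_natY {Y' : ModuleCat.{0} R} (g : Y ⟶ Y') :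
    (((Ext R (ModuleCat.{0} R) n).obj (op X)).map g).op ≫ (isoD P Y n).hom =
      (isoD P Y' n).hom ≫ HomologicalComplex.homologyMap
        ((NatTrans.mapHomologicalComplex
          (NatTrans.rightOp ((linearYoneda R (ModuleCat.{0} R)).map g)) _).app P.complex) n := by
  have e2 := P.leftDerived_app_eq (NatTrans.rightOp ((linearYoneda R (ModuleCat.{0} R)).map g)) n
  rw [← Category.assoc, Iso.eq_comp_inv] at e2
  exact e2
  
lemma isoD_natX {X' : ModuleCat.{0} R} (f : X' ⟶ X) (Q : ProjectiveResolution X')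
    (l : Q.complex ⟶ P.complex) (comm : l.f 0 ≫ P.π.f 0 = Q.π.f 0 ≫ f) :
    (((Ext R (ModuleCat.{0} R) n).map f.op).app Y).op ≫ (isoD P Y n).hom =
      (isoD Q Y n).hom ≫ HomologicalComplex.homologyMap
        (((homF Y).mapHomologicalComplex _).map l) n :=
  ProjectiveResolution.isoLeftDerivedObj_hom_naturality f Q P l comm (homF Y) n

def clMor (φ : P.complex.X n ⟶ Y) (h : P.complex.d (n+1) n ≫ φ = 0) :
    op (extO X Y n) ⟶ op (ModuleCat.of R R) :=
  (isoD P Y n).hom ≫ (homK P Y).homologyι n ≫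
    (homK P Y).descOpcycles (elHom P φ) (n+1) (by simp) (elHom_cocycle P φ h)

/-- class of a cocycle in Ext -/
def clE (φ : P.complex.X n ⟶ Y) (h : P.complex.d (n+1) n ≫ φ = 0) : extO X Y n :=
  (clMor P φ h).unop.hom (1 : R)

lemma elM_clE (φ : P.complex.X n ⟶ Y) (h : P.complex.d (n+1) n ≫ φ = 0) :
    elM _ (clE P φ h) = clMor P φ h := (elM_surj _).symm

instance : Injective (op (ModuleCat.of R R)) := by
  have : Projective (ModuleCat.of R R) := inferInstance
  infer_instance

lemma clE_surj (z : extO X Y n) : ∃ φ h, z = clE P φ h := by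
  let f := (isoD P Y n).inv ≫ elM (extO X Y n) z
  have := mono_homι P (Y := Y) (n := n)
  let g := Injective.factorThru f ((homK P Y).homologyι n)
  have hg : (homK P Y).homologyι n ≫ g = f := Injective.comp_factorThru _ _
  obtain ⟨φ, hφ⟩ := elHom_surj P ((homK P Y).pOpcycles n ≫ g)
  have h : P.complex.d (n+1) n ≫ φ = 0 := by
    apply elHom_inj
    rw [← elHom_d, ← hφ, elHom_zero, ← Category.assoc, HomologicalComplex.d_pOpcycles, zero_comp]
  refine ⟨φ, h, ?_⟩
  apply elM_inj
  rw [elM_clE]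
  have : (homK P Y).descOpcycles (elHom P φ) (n+1) (by simp) (elHom_cocycle P φ h) = g := by
    rw [← cancel_epi ((homK P Y).pOpcycles n)]
    simp [hφ]
  rw [clMor, this, hg]
  simp [f]

lemma clE_add (φ ψ : P.complex.X n ⟶ Y) (h : P.complex.d (n+1) n ≫ φ = 0)
    (h' : P.complex.d (n+1) n ≫ ψ = 0) (h'' : P.complex.d (n+1) n ≫ (φ + ψ) = 0) :
    clE P (φ + ψ) h'' = clE P φ h + clE P ψ h' := by
  apply elM_inj
  rw [elM_add, elM_clE, elM_clE, elM_clE, clMor, clMor, clMor]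
  have : (homK P Y).descOpcycles (elHom P (φ+ψ)) (n+1) (by simp) (elHom_cocycle P _ h'') =
     (homK P Y).descOpcycles (elHom P φ) (n+1) (by simp) (elHom_cocycle P φ h) +
     (homK P Y).descOpcycles (elHom P ψ) (n+1) (by simp) (elHom_cocycle P ψ h') := by
    rw [← cancel_epi ((homK P Y).pOpcycles n)]
    simp only [Preadditive.comp_add, HomologicalComplex.p_descOpcycles]
    exact elM_add _ _
  rw [this]
  simp

lemma clE_zero_of_bd (φ : P.complex.X n ⟶ Y) (h : P.complex.d (n+1) n ≫ φ = 0)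
    (m : ℕ) (ψ : P.complex.X m ⟶ Y) (hψ : φ = P.complex.d n m ≫ ψ) : clE P φ h = 0 := by
  apply elM_inj
  rw [elM_zero, elM_clE, clMor, HomologicalComplex.homologyι_descOpcycles_eq_zero_of_boundary
     (i' := m) _ _ _ _ (elHom P ψ) (by rw [elHom_d, hψ]), comp_zero]

lemma clE_eq_zero (φ : P.complex.X n ⟶ Y) (h : P.complex.d (n+1) n ≫ φ = 0)
    (m : ℕ) (hm : (ComplexShape.down ℕ).next n = m)
    (h0 : clE P φ h = 0) : ∃ ψ : P.complex.X m ⟶ Y, φ = P.complex.d n m ≫ ψ := by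
  have h1 := elM_clE P φ h
  rw [h0, elM_zero, clMor] at h1
  have h2 : (homK P Y).homologyι n ≫
    (homK P Y).descOpcycles (elHom P φ) (n+1) (by simp) (elHom_cocycle P φ h) = 0 := by
    rw [← cancel_epi (isoD P Y n).hom, ← h1, comp_zero]
  have hex : (ShortComplex.mk ((homK P Y).homologyι n) ((homK P Y).fromOpcycles n m) (by simp)).Exact :=
    ShortComplex.exact_of_f_is_kernel _ ((homK P Y).homologyIsKernel n m hm)
  obtain ⟨ψ, hψ⟩ := elHom_surj P (hex.descToInjective _ h2)
  refine ⟨ψ, ?_⟩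
  apply elHom_inj
  rw [← elHom_d, ← hψ, ← HomologicalComplex.p_fromOpcycles, Category.assoc]
  have := hex.comp_descToInjective _ h2
  dsimp only at this
  rw [this]
  simp

lemma clE_natY {Y' : ModuleCat.{0} R} (g : Y ⟶ Y') (φ : P.complex.X n ⟶ Y)
    (h : P.complex.d (n+1) n ≫ φ = 0) (h' : P.complex.d (n+1) n ≫ (φ ≫ g) = 0) :
    (((Ext R (ModuleCat.{0} R) n).obj (op X)).map g).hom (clE P φ h) = clE P (φ ≫ g) h' := by
  apply elM_inj
  rw [← elM_comp, elM_clE, elM_clE]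
  rw [clMor, clMor, ← Category.assoc, isoD_natY, Category.assoc]
  congr 1
  rw [HomologicalComplex.homologyι_naturality_assoc]
  rw [HomologicalComplex.opcyclesMap_comp_descOpcycles]
  congr 2
  exact elM_comp (((linearYoneda R (ModuleCat.{0} R)).map g).app (op (P.complex.X n))) φ

lemma clE_natX {X' : ModuleCat.{0} R} (f : X' ⟶ X) (Q : ProjectiveResolution X')
    (l : Q.complex ⟶ P.complex) (comm : l.f 0 ≫ P.π.f 0 = Q.π.f 0 ≫ f)
    (φ : P.complex.X n ⟶ Y)
    (h : P.complex.d (n+1) n ≫ φ = 0) (h' : Q.complex.d (n+1) n ≫ (l.f n ≫ φ) = 0) :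
    (((Ext R (ModuleCat.{0} R) n).map f.op).app Y).hom (clE P φ h) = clE Q (l.f n ≫ φ) h' := by
  apply elM_inj
  rw [← elM_comp, elM_clE, elM_clE]
  rw [clMor, clMor, ← Category.assoc, isoD_natX P f Q l comm, Category.assoc]
  congr 1
  rw [HomologicalComplex.homologyι_naturality_assoc]
  rw [HomologicalComplex.opcyclesMap_comp_descOpcycles]
  congr 2

def rhoM (r : R) : op (ModuleCat.of R R) ⟶ op (ModuleCat.of R R) :=
  (ModuleCat.ofHom (LinearMap.toSpanSingleton R R r)).op

lemma elM_smul {N : ModuleCat.{0} R} (r : R) (z : N) : elM N (r • z) = elM N z ≫ rhoM r := by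
  apply Quiver.Hom.unop_inj
  ext
  simp [elM, rhoM]

lemma clE_smul (r : R) (φ : P.complex.X n ⟶ Y) (h : P.complex.d (n+1) n ≫ φ = 0)
    (h'' : P.complex.d (n+1) n ≫ (r • φ) = 0) :
    clE P (r • φ) h'' = r • clE P φ h := by
  apply elM_inj
  rw [elM_smul, elM_clE, elM_clE, clMor, clMor]
  have e : elHom P (r • φ) = elHom P φ ≫ rhoM r :=
    elM_smul (N := ModuleCat.of R (P.complex.X n ⟶ Y)) r φ
  simp only [Category.assoc, HomologicalComplex.descOpcycles_comp, e]
end PartA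

section PartB
open Opposite Limits
abbrev Xt (I : Ideal R) (t : ℕ) : ModuleCat.{0} R := ModuleCat.of R (R ⧸ I ^ t)

def Pt (I : Ideal R) (t : ℕ) : ProjectiveResolution (Xt I t) := projectiveResolution _

abbrev Ct (I : Ideal R) (t : ℕ) : ChainComplex (ModuleCat.{0} R) ℕ := (Pt I t).complex

abbrev lcD (I : Ideal R) (n : ℕ) := localCohomology.diagram (localCohomology.idealPowersDiagram I) n

def incH (I : Ideal R) (n : ℕ) (Y : ModuleCat.{0} R) (t : ℕ) :
    extO (Xt I t) Y n ⟶ (localCohomology I n).obj Y :=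
  (colimit.ι (lcD I n) (op (op t))).app Y

def lcEvalColimit (I : Ideal R) (n : ℕ) (Y : ModuleCat.{0} R) :=
  isColimitOfPreserves ((evaluation _ _).obj Y) (colimit.isColimit (lcD I n))

lemma incH_surj (I : Ideal R) (n : ℕ) (Y : ModuleCat.{0} R) (z : (localCohomology I n).obj Y) :
    ∃ t x, z = (incH I n Y t).hom x := by
  obtain ⟨j, x, hx⟩ := Concrete.isColimit_exists_rep _ (lcEvalColimit I n Y) z
  exact ⟨j.unop.unop, x, hx.symm⟩

/-- transition on quotients -/
def piX (I : Ideal R) {s t : ℕ} (h : t ≤ s) : Xt I s ⟶ Xt I t :=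
  ModuleCat.ofHom (Submodule.mapQ _ _ LinearMap.id (Ideal.pow_le_pow_right h))

lemma incH_zero (I : Ideal R) (n : ℕ) (Y : ModuleCat.{0} R) (t : ℕ) (x : extO (Xt I t) Y n)
    (hx : (incH I n Y t).hom x = 0) : ∃ s, ∃ h : t ≤ s,
      (((Ext R (ModuleCat.{0} R) n).map (piX I h).op).app Y).hom x = 0 := by
  obtain ⟨j, f, g, hh⟩ := Concrete.isColimit_exists_of_rep_eq (lcD I n ⋙ (evaluation _ _).obj Y)
    (lcEvalColimit I n Y) (i := op (op t)) (j := op (op t)) x 0 (by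
      rw [map_zero]; exact hx)
  refine ⟨j.unop.unop, f.unop.unop.down.down, ?_⟩
  rw [map_zero] at hh
  exact hh

lemma incH_trans (I : Ideal R) (n : ℕ) (Y : ModuleCat.{0} R) {s t : ℕ} (h : t ≤ s)
    (x : extO (Xt I t) Y n) :
    (incH I n Y s).hom ((((Ext R (ModuleCat.{0} R) n).map (piX I h).op).app Y).hom x) =
      (incH I n Y t).hom x := by
  have := congr_app (colimit.w (lcD I n) (homOfLE h).op.op) Y
  exact congrArg (fun f => f.hom x) this

def lamC (I : Ideal R) {s t : ℕ} (h : t ≤ s) : Ct I s ⟶ Ct I t :=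
  ProjectiveResolution.lift (piX I h) (Pt I s) (Pt I t)

lemma lamC_comm (I : Ideal R) {s t : ℕ} (h : t ≤ s) :
    (lamC I h).f 0 ≫ (Pt I t).π.f 0 = (Pt I s).π.f 0 ≫ piX I h :=
  ProjectiveResolution.lift_commutes_zero _ _ _

variable {I : Ideal R} {n : ℕ} {Y : ModuleCat.{0} R}

/-- class of a cocycle in local cohomology -/
def cH (t : ℕ) (φ : (Ct I t).X n ⟶ Y) (h : (Ct I t).d (n+1) n ≫ φ = 0) :
    (localCohomology I n).obj Y :=
  (incH I n Y t).hom (clE (Pt I t) φ h)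

lemma cH_surj (z : (localCohomology I n).obj Y) : ∃ t φ h, z = cH (I := I) t φ h := by
  obtain ⟨t, x, rfl⟩ := incH_surj I n Y z
  obtain ⟨φ, h, rfl⟩ := clE_surj (Pt I t) x
  exact ⟨t, φ, h, rfl⟩

lemma lam_cocycle {s t : ℕ} (hst : t ≤ s) (φ : (Ct I t).X n ⟶ Y)
    (h : (Ct I t).d (n+1) n ≫ φ = 0) :
    (Ct I s).d (n+1) n ≫ (lamC I hst).f n ≫ φ = 0 := by
  rw [← HomologicalComplex.Hom.comm_assoc, h, comp_zero]

lemma cH_lam {s t : ℕ} (hst : t ≤ s) (φ : (Ct I t).X n ⟶ Y) (h : (Ct I t).d (n+1) n ≫ φ = 0)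
    (h' : (Ct I s).d (n+1) n ≫ (lamC I hst).f n ≫ φ = 0) :
    cH s ((lamC I hst).f n ≫ φ) h' = cH t φ h := by
  rw [cH, cH, ← incH_trans I n Y hst, clE_natX (Pt I t) (piX I hst) (Pt I s) _ (lamC_comm I hst)]

lemma cH_eq_zero {t : ℕ} (φ : (Ct I t).X n ⟶ Y) (h : (Ct I t).d (n+1) n ≫ φ = 0)
    (m : ℕ) (hm : (ComplexShape.down ℕ).next n = m) (h0 : cH t φ h = 0) :
    ∃ s, ∃ hst : t ≤ s, ∃ ψ : (Ct I s).X m ⟶ Y,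
      (lamC I hst).f n ≫ φ = (Ct I s).d n m ≫ ψ := by
  obtain ⟨s, hst, h1⟩ := incH_zero I n Y t _ h0
  rw [clE_natX (Pt I t) (piX I hst) (Pt I s) _ (lamC_comm I hst) _ _ (lam_cocycle hst φ h)] at h1
  obtain ⟨ψ, hψ⟩ := clE_eq_zero _ _ _ m hm h1
  exact ⟨s, hst, ψ, hψ⟩

lemma cH_bd {t : ℕ} (φ : (Ct I t).X n ⟶ Y) (h : (Ct I t).d (n+1) n ≫ φ = 0)
    (m : ℕ) (ψ : (Ct I t).X m ⟶ Y) (hψ : φ = (Ct I t).d n m ≫ ψ) : cH t φ h = 0 := by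
  rw [cH, clE_zero_of_bd _ φ h m ψ hψ, map_zero]

lemma cH_add {t : ℕ} (φ ψ : (Ct I t).X n ⟶ Y) (h : (Ct I t).d (n+1) n ≫ φ = 0)
    (h' : (Ct I t).d (n+1) n ≫ ψ = 0) (h'' : (Ct I t).d (n+1) n ≫ (φ + ψ) = 0) :
    cH t (φ + ψ) h'' = cH t φ h + cH t ψ h' := by
  rw [cH, clE_add _ φ ψ h h', map_add]; rfl

lemma cH_smul {t : ℕ} (r : R) (φ : (Ct I t).X n ⟶ Y) (h : (Ct I t).d (n+1) n ≫ φ = 0)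
    (h'' : (Ct I t).d (n+1) n ≫ (r • φ) = 0) :
    cH t (r • φ) h'' = r • cH t φ h := by
  rw [cH, clE_smul _ r φ h, map_smul]; rfl

lemma cH_map {Y' : ModuleCat.{0} R} (g : Y ⟶ Y') {t : ℕ} (φ : (Ct I t).X n ⟶ Y)
    (h : (Ct I t).d (n+1) n ≫ φ = 0) (h' : (Ct I t).d (n+1) n ≫ φ ≫ g = 0) :
    ((localCohomology I n).map g).hom (cH t φ h) = cH t (φ ≫ g) h' := by
  rw [cH, cH, ← clE_natY (Pt I t) g φ h]
  have := (colimit.ι (lcD I n) (op (op t))).naturality g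
  exact (congrArg (fun f => f.hom (clE (Pt I t) φ h)) this).symm
end PartB

section PartC
open Opposite Limits
variable {I : Ideal R} {n : ℕ} {Y : ModuleCat.{0} R}
lemma exists_linearMap_of_rel {A B : Type} [AddCommGroup A] [AddCommGroup B] [Module R A]
    [Module R B] (G : Submodule R (A × B)) (tot : ∀ a, ∃ b, (a, b) ∈ G)
    (fn : ∀ b, ((0 : A), b) ∈ G → b = 0) :
    ∃ f : A →ₗ[R] B, ∀ a b, (a, b) ∈ G ↔ f a = b := by
  choose f hf using tot
  have key : ∀ a b, (a, b) ∈ G → f a = b := by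
    intro a b h
    have := G.sub_mem (hf a) h
    rw [Prod.mk_sub_mk, sub_self] at this
    exact sub_eq_zero.1 (fn _ this)
  refine ⟨{ toFun := f, map_add' := fun a b => key _ _ ?_, map_smul' := fun r a => key _ _ ?_ },
    fun a b => ⟨key a b, ?_⟩⟩
  · exact G.add_mem (hf a) (hf b)
  · exact G.smul_mem r (hf a)
  · rintro rfl
    exact hf a

instance (t n : ℕ) : Projective ((Ct I t).X n) := (Pt I t).projective n

def deltaRel (I : Ideal R) (S : ShortComplex (ModuleCat.{0} R)) (n : ℕ) :
    Submodule R ((localCohomology I n).obj S.X₃ × (localCohomology I (n+1)).obj S.X₁) where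
  carrier := {p | ∃ (t : ℕ) (β : (Ct I t).X n ⟶ S.X₂) (α : (Ct I t).X (n+1) ⟶ S.X₁)
    (hβ : (Ct I t).d (n+1) n ≫ β ≫ S.g = 0) (hα : (Ct I t).d (n+1+1) (n+1) ≫ α = 0),
    α ≫ S.f = (Ct I t).d (n+1) n ≫ β ∧ p.1 = cH t (β ≫ S.g) hβ ∧ p.2 = cH t α hα}
  zero_mem' := by
    refine ⟨0, 0, 0, by simp, by simp, by simp, ?_, ?_⟩
    · exact (cH_bd _ _ n 0 (by simp)).symm
    · exact (cH_bd _ _ n 0 (by simp)).symm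
  add_mem' := by
    rintro ⟨a, b⟩ ⟨a', b'⟩ ⟨t, β, α, hβ, hα, h, rfl, rfl⟩ ⟨t', β', α', hβ', hα', h', rfl, rfl⟩
    have hs := le_max_left t t'
    have hs' := le_max_right t t'
    have e1 : (lamC I hs).f (n+1) ≫ α ≫ S.f = (Ct I (max t t')).d (n+1) n ≫ (lamC I hs).f n ≫ β := by
      rw [h, HomologicalComplex.Hom.comm_assoc]
    have e1' : (lamC I hs').f (n+1) ≫ α' ≫ S.f = (Ct I (max t t')).d (n+1) n ≫ (lamC I hs').f n ≫ β' := by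
      rw [h', HomologicalComplex.Hom.comm_assoc]
    have e2 := lam_cocycle hs α hα
    have e2' := lam_cocycle hs' α' hα'
    have e3 := lam_cocycle hs _ hβ
    have e3' := lam_cocycle hs' _ hβ'
    refine ⟨max t t', (lamC I hs).f n ≫ β + (lamC I hs').f n ≫ β',
      (lamC I hs).f (n+1) ≫ α + (lamC I hs').f (n+1) ≫ α', ?_, ?_, ?_, ?_, ?_⟩
    · simp only [Preadditive.add_comp, Preadditive.comp_add, Category.assoc, e3, e3', add_zero]
    · simp only [Preadditive.comp_add, e2, e2', add_zero]
    · simp only [Preadditive.add_comp, Preadditive.comp_add, Category.assoc, e1, e1']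
    · rw [Prod.mk_add_mk]
      simp only [Preadditive.add_comp, Category.assoc]
      rw [cH_add _ _ e3 e3', cH_lam, cH_lam]
    · rw [Prod.mk_add_mk]
      rw [cH_add _ _ e2 e2', cH_lam, cH_lam]
  smul_mem' := by
    rintro r ⟨a, b⟩ ⟨t, β, α, hβ, hα, h, rfl, rfl⟩
    refine ⟨t, r • β, r • α, ?_, ?_, ?_, ?_, ?_⟩
    · rw [Linear.smul_comp, Linear.comp_smul, hβ, smul_zero]
    · rw [Linear.comp_smul, hα, smul_zero]
    · rw [Linear.smul_comp, Linear.comp_smul, h]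
    · rw [Prod.smul_mk]
      simp only [Linear.smul_comp]
      rw [cH_smul _ _ hβ]
    · rw [Prod.smul_mk]
      rw [cH_smul _ _ hα]

lemma lift_mono (S : ShortComplex (ModuleCat.{0} R)) (hS : S.ShortExact) {Z : ModuleCat.{0} R}
    (k : Z ⟶ S.X₂) (hk : k ≫ S.g = 0) : ∃ l : Z ⟶ S.X₁, l ≫ S.f = k := by
  have := hS.mono_f
  exact ⟨hS.exact.lift k hk, hS.exact.lift_f k hk⟩

lemma lift_epi (S : ShortComplex (ModuleCat.{0} R)) (hS : S.ShortExact) {Z : ModuleCat.{0} R}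
    [Projective Z] (k : Z ⟶ S.X₃) : ∃ l : Z ⟶ S.X₂, l ≫ S.g = k := by
  have := hS.epi_g
  exact ⟨Projective.factorThru k S.g, Projective.factorThru_comp _ _⟩

lemma les_delta (I : Ideal R) (S : ShortComplex (ModuleCat.{0} R)) (hS : S.ShortExact) (n : ℕ) :
    ∃ δ : (localCohomology I n).obj S.X₃ →ₗ[R] (localCohomology I (n+1)).obj S.X₁,
      (∀ z, δ z = 0 → ∃ b, ((localCohomology I n).map S.g).hom b = z) ∧
      (∀ b, δ (((localCohomology I n).map S.g).hom b) = 0) ∧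
      (∀ w, ((localCohomology I (n+1)).map S.f).hom w = 0 → ∃ z, δ z = w) := by
  have hmono := hS.mono_f
  have tot : ∀ a, ∃ b, (a, b) ∈ deltaRel I S n := by
    intro z
    obtain ⟨t, φ, h, rfl⟩ := cH_surj z
    obtain ⟨β, rfl⟩ := lift_epi S hS φ
    obtain ⟨α, hα⟩ := lift_mono S hS ((Ct I t).d (n+1) n ≫ β) (by rw [Category.assoc, h])
    have e : (Ct I t).d (n+1+1) (n+1) ≫ α = 0 := by
      rw [← cancel_mono S.f, Category.assoc, hα]
      simp
    exact ⟨cH t α e, t, β, α, h, e, hα, rfl, rfl⟩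
  have fn : ∀ b, (0, b) ∈ deltaRel I S n → b = 0 := by
    rintro w ⟨t, β, α, hβ, hα, h, h1, rfl⟩
    dsimp only at h1 ⊢
    obtain ⟨m, hm⟩ : ∃ m, (ComplexShape.down ℕ).next n = m := ⟨_, rfl⟩
    obtain ⟨s, hst, ψ, hψ⟩ := cH_eq_zero _ hβ m hm h1.symm
    obtain ⟨ψ', rfl⟩ := lift_epi S hS ψ
    obtain ⟨γ, hγ⟩ := lift_mono S hS ((lamC I hst).f n ≫ β - (Ct I s).d n m ≫ ψ') (by
      simp [hψ])
    rw [← cH_lam hst _ _ (lam_cocycle hst _ hα)]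
    refine cH_bd _ _ n γ ?_
    rw [← cancel_mono S.f, Category.assoc, h, Category.assoc, hγ]
    simp
  obtain ⟨δ, hδ⟩ := exists_linearMap_of_rel (deltaRel I S n) tot fn
  · refine ⟨δ, ?_, ?_, ?_⟩
    · intro z hz
      obtain ⟨t, β, α, hβ, hα, h, h1, h2⟩ := (hδ z 0).2 hz
      dsimp only at h1 h2
      obtain ⟨s, hst, γ, hγ⟩ := cH_eq_zero α hα n (by simp) h2.symm
      have e : (Ct I s).d (n+1) n ≫ ((lamC I hst).f n ≫ β - γ ≫ S.f) = 0 := by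
        rw [Preadditive.comp_sub, ← HomologicalComplex.Hom.comm_assoc, ← h, ← Category.assoc,
         ← Category.assoc, hγ, sub_self]
      refine ⟨cH s _ e, ?_⟩
      have e4 := lam_cocycle hst _ hβ
      rw [cH_map _ _ _ (by rw [← Category.assoc, e, zero_comp]), h1]
      simp only [Preadditive.sub_comp, Category.assoc, S.zero, comp_zero, sub_zero]
      rw [cH_lam]
    · intro b
      obtain ⟨t, φ, h, rfl⟩ := cH_surj b
      rw [← hδ, cH_map _ _ _ (by rw [← Category.assoc, h, zero_comp])]
      refine ⟨t, φ, 0, by rw [← Category.assoc, h, zero_comp], by simp, by simp [h], rfl, ?_⟩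
      exact (cH_bd _ _ n 0 (by simp)).symm
    · intro w hw
      obtain ⟨t, φ, h, rfl⟩ := cH_surj w
      rw [cH_map _ _ _ (by rw [← Category.assoc, h, zero_comp])] at hw
      obtain ⟨s, hst, β, hβ⟩ := cH_eq_zero _ _ n (by simp) hw
      have e : (Ct I s).d (n+1) n ≫ β ≫ S.g = 0 := by
        rw [← Category.assoc, ← hβ]
        simp
      refine ⟨cH s (β ≫ S.g) e, ?_⟩
      rw [← hδ]
      refine ⟨s, β, (lamC I hst).f (n+1) ≫ φ, e, lam_cocycle hst _ h, ?_, rfl, ?_⟩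
      · rw [Category.assoc, hβ]
      · rw [cH_lam]

lemma les_mid (I : Ideal R) (S : ShortComplex (ModuleCat.{0} R)) (hS : S.ShortExact) (n : ℕ)
    (b : (localCohomology I n).obj S.X₂) (hb : ((localCohomology I n).map S.g).hom b = 0) :
    ∃ a, ((localCohomology I n).map S.f).hom a = b := by
  have hmono := hS.mono_f
  obtain ⟨t, φ, h, rfl⟩ := cH_surj b
  rw [cH_map _ _ _ (by rw [← Category.assoc, h, zero_comp])] at hb
  obtain ⟨m, hm⟩ : ∃ m, (ComplexShape.down ℕ).next n = m := ⟨_, rfl⟩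
  obtain ⟨s, hst, ψ, hψ⟩ := cH_eq_zero _ _ m hm hb
  obtain ⟨ψ', rfl⟩ := lift_epi S hS ψ
  obtain ⟨γ, hγ⟩ := lift_mono S hS ((lamC I hst).f n ≫ φ - (Ct I s).d n m ≫ ψ') (by
      simp [hψ])
  have e := lam_cocycle hst _ h
  have e' : (Ct I s).d (n+1) n ≫ γ = 0 := by
    rw [← cancel_mono S.f, Category.assoc, hγ]
    simp [e]
  refine ⟨cH s γ e', ?_⟩
  have e5 : (Ct I s).d (n+1) n ≫ (-((Ct I s).d n m ≫ ψ')) = 0 := by simp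
  rw [cH_map _ _ _ (by rw [← Category.assoc, e', zero_comp]), ← cH_lam hst φ h e]
  simp only [hγ, sub_eq_add_neg]
  rw [cH_add _ _ e e5, cH_bd (-((Ct I s).d n m ≫ ψ')) _ m (-ψ') (by simp), add_zero]

lemma les_inj0 (I : Ideal R) (S : ShortComplex (ModuleCat.{0} R)) (hS : S.ShortExact) 
    (b : (localCohomology I 0).obj S.X₁) (hb : ((localCohomology I 0).map S.f).hom b = 0) :
    b = 0 := by
  have hmono := hS.mono_f
  obtain ⟨t, φ, h, rfl⟩ := cH_surj b
  rw [cH_map _ _ _ (by rw [← Category.assoc, h, zero_comp])] at hb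
  obtain ⟨s, hst, ψ, hψ⟩ := cH_eq_zero _ _ 0 (by simp) hb
  rw [← cH_lam hst _ _ (lam_cocycle hst _ h)]
  refine cH_bd _ _ 0 0 ?_
  rw [← cancel_mono S.f, Category.assoc, hψ]
  simp

lemma H_inj_vanish (I : Ideal R) (n : ℕ) (E : ModuleCat.{0} R) [Injective E] :
    Subsingleton ((localCohomology I (n+1)).obj E) := by
  refine subsingleton_of_forall_eq 0 fun z => ?_
  obtain ⟨t, φ, h, rfl⟩ := cH_surj z
  have hex := (Pt I t).exact_succ n
  refine cH_bd _ _ n (hex.descToInjective φ h) ?_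
  exact (hex.comp_descToInjective φ h).symm
end PartC

section PartD
open Opposite Limits
/-- the augmentation -/
def augP (I : Ideal R) (t : ℕ) : (Ct I t).X 0 ⟶ Xt I t := (Pt I t).π.f 0

lemma augP_epi (I : Ideal R) (t : ℕ) : Epi (augP I t) :=
  inferInstanceAs (Epi ((Pt I t).π.f 0))

lemma augP_zero (I : Ideal R) (t : ℕ) : (Ct I t).d 1 0 ≫ augP I t = 0 :=
  (Pt I t).complex_d_comp_π_f_zero

lemma augP_exact (I : Ideal R) (t : ℕ) : (ShortComplex.mk _ _ (augP_zero I t)).Exact :=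
  (Pt I t).exact₀

lemma augP_zero' (I : Ideal R) (t : ℕ) {Y : ModuleCat.{0} R} (k : Xt I t ⟶ Y) :
    (Ct I t).d (0+1) 0 ≫ augP I t ≫ k = 0 := by
  rw [zero_add, ← Category.assoc, augP_zero, zero_comp]

lemma augP_desc (I : Ideal R) (t : ℕ) {Y : ModuleCat.{0} R} (φ : (Ct I t).X 0 ⟶ Y)
    (h : (Ct I t).d (0+1) 0 ≫ φ = 0) : ∃ k : Xt I t ⟶ Y, augP I t ≫ k = φ := by
  have := augP_epi I t
  exact ⟨(augP_exact I t).desc φ h, (augP_exact I t).g_desc φ h⟩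

lemma augP_lam (I : Ideal R) {s t : ℕ} (h : t ≤ s) :
    (lamC I h).f 0 ≫ augP I t = augP I s ≫ piX I h := lamC_comm I h

def oneX (I : Ideal R) (t : ℕ) : Xt I t := (Submodule.Quotient.mk (1 : R) : R ⧸ I ^ t)

lemma piX_one (I : Ideal R) {s t : ℕ} (h : t ≤ s) : (piX I h).hom (oneX I s) = oneX I t := rfl

lemma hom_Xt_ext (I : Ideal R) (t : ℕ) {Y : ModuleCat.{0} R} (k k' : Xt I t ⟶ Y)
    (h : k.hom (oneX I t) = k'.hom (oneX I t)) : k = k' := by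
  ext
  exact h

lemma hom_Xt_exists (I : Ideal R) (t : ℕ) {Y : ModuleCat.{0} R} (y : Y)
    (hy : ∀ a ∈ I ^ t, a • y = 0) : ∃ k : Xt I t ⟶ Y, k.hom (oneX I t) = y := by
  refine ⟨ModuleCat.ofHom (Submodule.liftQ (I ^ t) (LinearMap.toSpanSingleton R Y y) ?_), ?_⟩
  · intro a ha
    rw [LinearMap.mem_ker, LinearMap.toSpanSingleton_apply]
    exact hy a ha
  · exact one_smul R y

def rel0 (I : Ideal R) (Y : ModuleCat.{0} R) :
    Submodule R ((localCohomology I 0).obj Y × Y) where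
  carrier := {p | ∃ (t : ℕ) (k : Xt I t ⟶ Y), p.1 = cH t (augP I t ≫ k) (augP_zero' I t k) ∧
    k.hom (oneX I t) = p.2}
  zero_mem' := by
    refine ⟨0, 0, ?_, by simp⟩
    exact (cH_bd _ _ 0 0 (by simp)).symm
  add_mem' := by
    rintro ⟨a, b⟩ ⟨a', b'⟩ ⟨t, k, h1, h2⟩ ⟨t', k', h1', h2'⟩
    have hs := le_max_left t t'
    have hs' := le_max_right t t'
    refine ⟨max t t', piX I hs ≫ k + piX I hs' ≫ k', ?_, ?_⟩
    · dsimp only at h1 h1'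
      rw [← cH_lam hs _ _ (lam_cocycle hs _ (augP_zero' I t k))] at h1
      rw [← cH_lam hs' _ _ (lam_cocycle hs' _ (augP_zero' I t' k'))] at h1'
      have e : (lamC I hs).f 0 ≫ augP I t ≫ k = augP I (max t t') ≫ piX I hs ≫ k := by
        rw [← Category.assoc, augP_lam, Category.assoc]
      have e' : (lamC I hs').f 0 ≫ augP I t' ≫ k' = augP I (max t t') ≫ piX I hs' ≫ k' := by
        rw [← Category.assoc, augP_lam, Category.assoc]
      simp only [e] at h1
      simp only [e'] at h1'
      rw [Prod.mk_add_mk]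
      simp only [Preadditive.comp_add]
      rw [cH_add _ _ (augP_zero' I _ _) (augP_zero' I _ _), h1, h1']
    · dsimp only at h2 h2'
      exact congrArg₂ (· + ·) h2 h2'
  smul_mem' := by
    rintro r ⟨a, b⟩ ⟨t, k, h1, h2⟩
    dsimp only at h1 h2
    refine ⟨t, r • k, ?_, ?_⟩
    · rw [Prod.smul_mk]
      simp only [Linear.comp_smul]
      rw [cH_smul _ _ (augP_zero' I _ _), h1]
    · simp [h2]

lemma exists_jH (I : Ideal R) (Y : ModuleCat.{0} R) :
    ∃ j : (localCohomology I 0).obj Y →ₗ[R] Y, ∀ a b, (a, b) ∈ rel0 I Y ↔ j a = b := by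
  apply exists_linearMap_of_rel
  · intro z
    obtain ⟨t, φ, h, rfl⟩ := cH_surj z
    obtain ⟨k, rfl⟩ := augP_desc I t φ h
    exact ⟨_, t, k, rfl, rfl⟩
  · rintro b ⟨t, k, h1, rfl⟩
    dsimp only at h1 ⊢
    obtain ⟨s, hst, ψ, hψ⟩ := cH_eq_zero _ _ 0 (by simp) h1.symm
    rw [(Ct I s).shape _ _ (by simp), zero_comp, ← Category.assoc, augP_lam, Category.assoc] at hψ
    have := augP_epi I s
    rw [← comp_zero (f := augP I s), cancel_epi] at hψ
    rw [← piX_one I hst]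
    exact congrArg (fun f => f.hom (oneX I s)) hψ

variable (I : Ideal R) (n : ℕ) {M N L : Type} [AddCommGroup M] [Module R M]
  [AddCommGroup N] [Module R N] [AddCommGroup L] [Module R L]

def jH (M : Type) [AddCommGroup M] [Module R M] : locH I 0 M →ₗ[R] M :=
  (exists_jH I (ModuleCat.of R M)).choose

lemma jH_spec (a : locH I 0 M) (b : M) : (a, b) ∈ rel0 I (ModuleCat.of R M) ↔ jH I M a = b :=
  (exists_jH I (ModuleCat.of R M)).choose_spec a b

def Hm (f : M →ₗ[R] N) : locH I n M →ₗ[R] locH I n N :=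
  ((localCohomology I n).map (ModuleCat.ofHom f)).hom

lemma Hm_comp (g : N →ₗ[R] L) (f : M →ₗ[R] N) (z : locH I n M) :
    Hm I n (g ∘ₗ f) z = Hm I n g (Hm I n f z) := by
  simp [Hm, ModuleCat.ofHom_comp]

lemma Hm_id (z : locH I n M) : Hm I n (LinearMap.id : M →ₗ[R] M) z = z := by
  simp [Hm]

lemma Hm_smul (r : R) (f : M →ₗ[R] N) (z : locH I n M) :
    Hm I n (r • f) z = r • Hm I n f z := by
  obtain ⟨t, φ, h, rfl⟩ := cH_surj z
  rw [Hm, Hm, cH_map _ _ _ (by rw [← Category.assoc, h, zero_comp]),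
    cH_map _ _ _ (by rw [← Category.assoc, h, zero_comp]), ← cH_smul]
  rfl

lemma Hm_smul_id (r : R) (z : locH I n M) :
    Hm I n (r • (LinearMap.id : M →ₗ[R] M)) z = r • z := by
  rw [Hm_smul, Hm_id]

lemma jH_inj : Function.Injective (jH I M) := by
  rw [injective_iff_map_eq_zero]
  intro a ha
  obtain ⟨t, k, h1, h2⟩ := (jH_spec I a 0).2 ha
  dsimp only at h1 h2
  obtain rfl : k = 0 := hom_Xt_ext _ _ _ _ (by rw [h2]; rfl)
  rw [h1]
  exact cH_bd _ _ 0 0 (by simp)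

lemma jH_tors (a : locH I 0 M) : ∃ t, ∀ r ∈ I ^ t, r • jH I M a = 0 := by
  obtain ⟨t, k, h1, h2⟩ := (jH_spec I a _).2 rfl
  refine ⟨t, fun r hr => ?_⟩
  dsimp only at h2
  rw [← h2, ← map_smul]
  have : r • oneX I t = 0 := by
    rw [oneX, ← Submodule.Quotient.mk_smul, Submodule.Quotient.mk_eq_zero]
    simpa using hr
  rw [this, map_zero]

lemma jH_range (m : M) (t : ℕ) (hm : ∀ r ∈ I ^ t, r • m = 0) : ∃ a, jH I M a = m := by
  obtain ⟨k, hk⟩ := hom_Xt_exists I t (Y := ModuleCat.of R M) m hm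
  exact ⟨_, (jH_spec I _ m).1 ⟨t, k, rfl, hk⟩⟩

lemma jH_nat (f : M →ₗ[R] N) (a : locH I 0 M) : jH I N (Hm I 0 f a) = f (jH I M a) := by
  obtain ⟨t, k, h1, h2⟩ := (jH_spec I a _).2 rfl
  dsimp only at h1 h2
  rw [← jH_spec]
  refine ⟨t, k ≫ ModuleCat.ofHom f, ?_, ?_⟩
  · dsimp only
    rw [h1, Hm, cH_map]
    rfl
  · dsimp only
    rw [← h2]
    rfl

variable {n}

lemma H_tors (z : locH I n M) : ∃ t, ∀ r ∈ I ^ t, r • z = 0 := by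
  obtain ⟨t, x, rfl⟩ := incH_surj I n _ z
  refine ⟨t, fun r hr => ?_⟩
  obtain ⟨φ, h, rfl⟩ := clE_surj (Pt I t) x
  have hz : r • (𝟙 (Xt I t)) = 0 := by
    refine hom_Xt_ext _ _ _ _ ?_
    change r • oneX I t = 0
    rw [oneX, ← Submodule.Quotient.mk_smul, Submodule.Quotient.mk_eq_zero]
    simpa using hr
  have c1 : (r • 𝟙 (Ct I t)).f 0 ≫ augP I t = augP I t ≫ (0 : Xt I t ⟶ Xt I t) := by
    rw [← hz]
    rw [HomologicalComplex.smul_f_apply, HomologicalComplex.id_f, Linear.smul_comp,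
      Linear.comp_smul, Category.id_comp, Category.comp_id]
  have c2 : (0 : Ct I t ⟶ Ct I t).f 0 ≫ augP I t =
      augP I t ≫ (0 : Xt I t ⟶ Xt I t) := by simp
  have hh1 : (Ct I t).d (n+1) n ≫ ((r • 𝟙 (Ct I t)).f n ≫ φ) = 0 := by
    rw [← Category.assoc, ← (r • 𝟙 (Ct I t)).comm, Category.assoc, h, comp_zero]
  have hh2 : (Ct I t).d (n+1) n ≫ ((0 : Ct I t ⟶ Ct I t).f n ≫ φ) = 0 := by simp
  have e1 := clE_natX (Pt I t) 0 (Pt I t) _ c1 φ h hh1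
  have e2 := clE_natX (Pt I t) 0 (Pt I t) _ c2 φ h hh2
  rw [e1] at e2
  have e3 : clE (Pt I t) _ hh2 = 0 := clE_zero_of_bd _ _ _ 0 0 (by simp)
  have e4 : (r • 𝟙 (Ct I t)).f n ≫ φ = r • φ := by
    rw [HomologicalComplex.smul_f_apply, HomologicalComplex.id_f, Linear.smul_comp,
      Category.id_comp]
  rw [e3] at e2
  simp only [e4] at e2
  rw [clE_smul _ _ _ h] at e2
  rw [← map_smul, e2, map_zero]

lemma ses_shortExact (f : M →ₗ[R] N) (g : N →ₗ[R] L) (hf : Function.Injective f)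
    (hg : Function.Surjective g) (hfg : Function.Exact f g) :
    (ModuleCat.shortComplexOfCompEqZero f g hfg.linearMap_comp_eq_zero).ShortExact :=
  ModuleCat.shortComplex_shortExact _ hfg hf hg

variable (n) in
lemma les (f : M →ₗ[R] N) (g : N →ₗ[R] L) (hf : Function.Injective f)
    (hg : Function.Surjective g) (hfg : Function.Exact f g) :
    ∃ δ : locH I n L →ₗ[R] locH I (n+1) M, (∀ z, δ z = 0 → ∃ b, Hm I n g b = z) ∧
      (∀ b, δ (Hm I n g b) = 0) ∧ (∀ w, Hm I (n+1) f w = 0 → ∃ z, δ z = w) :=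
  les_delta I _ (ses_shortExact f g hf hg hfg) n

lemma lesm (f : M →ₗ[R] N) (g : N →ₗ[R] L) (hf : Function.Injective f)
    (hg : Function.Surjective g) (hfg : Function.Exact f g)
    (b : locH I n N) (hb : Hm I n g b = 0) : ∃ a, Hm I n f a = b :=
  les_mid I _ (ses_shortExact f g hf hg hfg) n b hb

lemma Hm_inj0 (f : M →ₗ[R] N) (hf : Function.Injective f) : Function.Injective (Hm I 0 f) := by
  intro a b h
  apply jH_inj
  apply hf
  rw [← jH_nat, ← jH_nat, h]
end PartD

section PartE

/-- every element is killed by a power of the ideal -/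
def IsTors (I : Ideal R) (N : Type) [AddCommGroup N] [Module R N] : Prop :=
  ∀ m : N, ∃ t : ℕ, ∀ r ∈ I ^ t, r • m = 0

/-- the torsion submodule -/
def gam (I : Ideal R) (N : Type) [AddCommGroup N] [Module R N] : Submodule R N where
  carrier := {m | ∃ t : ℕ, ∀ r ∈ I ^ t, r • m = 0}
  zero_mem' := ⟨0, by simp⟩
  add_mem' := by
    rintro a b ⟨t, h⟩ ⟨t', h'⟩
    refine ⟨max t t', fun r hr => ?_⟩
    rw [smul_add, h r (Ideal.pow_le_pow_right (le_max_left _ _) hr),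
      h' r (Ideal.pow_le_pow_right (le_max_right _ _) hr), add_zero]
  smul_mem' := by
    rintro s a ⟨t, h⟩
    exact ⟨t, fun r hr => by rw [smul_comm, h r hr, smul_zero]⟩

section
variable (I : Ideal R) {M N L : Type} [AddCommGroup M] [Module R M]
  [AddCommGroup N] [Module R N] [AddCommGroup L] [Module R L]

lemma gam_tors : IsTors I (gam I N) := by
  rintro ⟨m, t, h⟩
  exact ⟨t, fun r hr => Subtype.ext (h r hr)⟩

lemma IsTors.of_surj {I : Ideal R} (h : IsTors I M) (g : M →ₗ[R] N) (hg : Function.Surjective g) :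
    IsTors I N := by
  intro m
  obtain ⟨m, rfl⟩ := hg m
  obtain ⟨t, ht⟩ := h m
  exact ⟨t, fun r hr => by rw [← map_smul, ht r hr, map_zero]⟩

/-- finitely generated torsion is killed by a power -/
lemma fg_tors (P : Submodule R N) (hP : P.FG) (h : ∀ m ∈ P, ∃ t : ℕ, ∀ r ∈ I ^ t, r • m = 0) :
    ∃ t : ℕ, ∀ r ∈ I ^ t, ∀ m ∈ P, r • m = 0 := by
  obtain ⟨S, rfl⟩ := hP
  choose! t ht using h
  refine ⟨S.sup t, fun r hr m hm => ?_⟩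
  induction hm using Submodule.span_induction with
  | mem x hx => exact ht x (Submodule.subset_span hx) r
                  (Ideal.pow_le_pow_right (Finset.le_sup (f := t) hx) hr)
  | zero => simp
  | add x y _ _ h1 h2 => rw [smul_add, h1, h2, add_zero]
  | smul a x _ h1 => rw [smul_comm, h1, smul_zero]

variable [IsNoetherianRing R]

lemma gam_injective (E : Type) [AddCommGroup E] [Module R E] [Module.Injective R E] :
    Module.Injective R (gam I E) := by
  apply Module.Baer.injective
  intro J f
  obtain ⟨n, hn⟩ : ∃ n : ℕ, ∀ r ∈ I ^ n, ∀ m ∈ (⊤ : Submodule R J).map f, r • m = 0 := by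
    apply fg_tors
    · exact Submodule.FG.map _ (IsNoetherian.noetherian _)
    · intro m _
      exact gam_tors I m
  obtain ⟨k, hk⟩ := Ideal.exists_pow_inf_eq_pow_smul I (M := R) J
  have hkey : ∀ x (hx : x ∈ J), x ∈ I ^ (n + k) → f ⟨x, hx⟩ = 0 := by
    intro x hx hxI
    have h1 : x ∈ I ^ (n + k) • (⊤ : Submodule R R) ⊓ J := ⟨by simpa using hxI, hx⟩
    rw [hk _ (Nat.le_add_left _ _), Nat.add_sub_cancel] at h1
    have h2 : x ∈ I ^ n • (J : Submodule R R) := (Submodule.smul_mono le_rfl inf_le_right) h1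
    have h3 : I ^ n • (J : Submodule R R) ≤ (LinearMap.ker f).map J.subtype := by
      rw [Submodule.smul_le]
      intro r hr j hj
      refine ⟨r • ⟨j, hj⟩, ?_, rfl⟩
      rw [SetLike.mem_coe, LinearMap.mem_ker, map_smul]
      exact hn r hr _ ⟨_, trivial, rfl⟩
    obtain ⟨y, hy, rfl⟩ := h3 h2
    exact hy
  set p : J →ₗ[R] (R ⧸ I ^ (n + k)) := (Submodule.mkQ _).comp (Submodule.subtype J) with hp
  have hker : LinearMap.ker p ≤ LinearMap.ker ((gam I E).subtype ∘ₗ f) := by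
    rintro ⟨x, hx⟩ hx'
    rw [LinearMap.mem_ker, hp, LinearMap.comp_apply, Submodule.mkQ_apply,
      Submodule.Quotient.mk_eq_zero] at hx'
    rw [LinearMap.mem_ker, LinearMap.comp_apply, hkey x hx hx', map_zero]
  obtain ⟨h, hh⟩ := Module.Injective.out (Q := E) ((LinearMap.ker p).liftQ p le_rfl)
    (LinearMap.ker_eq_bot.1 (Submodule.ker_liftQ_eq_bot _ _ _ le_rfl))
    ((LinearMap.ker p).liftQ _ hker)
  refine ⟨LinearMap.codRestrict (gam I E) (h ∘ₗ Submodule.mkQ _) ?_, ?_⟩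
  · intro c
    refine ⟨n + k, fun r hr => ?_⟩
    rw [LinearMap.comp_apply, ← map_smul, ← map_smul]
    have : (Submodule.mkQ (I ^ (n+k))) (r • c) = 0 := by
      rw [Submodule.mkQ_apply, Submodule.Quotient.mk_eq_zero]
      exact Ideal.mul_mem_right _ _ hr
    rw [this, map_zero]
  · intro x mem
    apply Subtype.ext
    have := hh (Submodule.Quotient.mk ⟨x, mem⟩)
    exact this

lemma exists_inj (N : Type) [AddCommGroup N] [Module R N] :
    ∃ (E : Type) (_ : AddCommGroup E) (_ : Module R E) (_ : Module.Injective R E)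
      (f : N →ₗ[R] E), Function.Injective f := by
  let X : ModuleCat.{0} R := ModuleCat.of R N
  let E : ModuleCat.{0} R := Injective.under X
  refine ⟨E, inferInstance, inferInstance, ?_, (Injective.ι X).hom, ?_⟩
  · have : Injective E := inferInstance
    exact Module.injective_module_of_injective_object R E
  · exact (ModuleCat.mono_iff_injective _).1 inferInstance

lemma tors_vanish (n : ℕ) : ∀ (N : Type) [AddCommGroup N] [Module R N], IsTors I N →
    Subsingleton (locH I (n+1) N) := by
  induction n with
  | zero =>
    intro N _ _ hN
    obtain ⟨E, _, _, _, f, hf⟩ := exists_inj (R := R) N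
    have := gam_injective I E
    let f' : N →ₗ[R] gam I E := LinearMap.codRestrict _ f (fun c => by
      obtain ⟨t, ht⟩ := hN c
      exact ⟨t, fun r hr => by rw [← map_smul, ht r hr, map_zero]⟩)
    have hf' : Function.Injective f' := fun a b h => hf (congrArg Subtype.val h)
    let g := (LinearMap.range f').mkQ
    have hg : Function.Surjective g := Submodule.mkQ_surjective _
    have hfg : Function.Exact f' g := LinearMap.exact_map_mkQ_range f'
    obtain ⟨δ, -, h2, h3⟩ := les I 0 f' g hf' hg hfg
    have : Injective (ModuleCat.of R (gam I E)) := Module.injective_object_of_injective_module R _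
    have hs := H_inj_vanish I 0 (ModuleCat.of R (gam I E))
    refine subsingleton_of_forall_eq 0 fun w => ?_
    obtain ⟨z, rfl⟩ := h3 w (hs.elim _ _)
    obtain ⟨y, hy⟩ := hg (jH I _ z)
    obtain ⟨t, ht⟩ := gam_tors I y
    obtain ⟨b, hb⟩ := jH_range I y t ht
    have : Hm I 0 g b = z := jH_inj I (by rw [jH_nat, hb, hy])
    rw [← this, h2]
  | succ n ih =>
    intro N _ _ hN
    obtain ⟨E, _, _, _, f, hf⟩ := exists_inj (R := R) N
    have := gam_injective I E
    let f' : N →ₗ[R] gam I E := LinearMap.codRestrict _ f (fun c => by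
      obtain ⟨t, ht⟩ := hN c
      exact ⟨t, fun r hr => by rw [← map_smul, ht r hr, map_zero]⟩)
    have hf' : Function.Injective f' := fun a b h => hf (congrArg Subtype.val h)
    let g := (LinearMap.range f').mkQ
    have hg : Function.Surjective g := Submodule.mkQ_surjective _
    have hfg : Function.Exact f' g := LinearMap.exact_map_mkQ_range f'
    obtain ⟨δ, -, h2, h3⟩ := les I (n+1) f' g hf' hg hfg
    have : Injective (ModuleCat.of R (gam I E)) := Module.injective_object_of_injective_module R _
    have hs := H_inj_vanish I (n+1) (ModuleCat.of R (gam I E))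
    have hs' := ih _ ((gam_tors I (N := E)).of_surj g hg)
    refine subsingleton_of_forall_eq 0 fun w => ?_
    obtain ⟨z, rfl⟩ := h3 w (hs.elim _ _)
    rw [hs'.elim z 0, map_zero]
end
end PartE

section PartF
section
/-- multiplication by an element -/
def mulE (N : Type) [AddCommGroup N] [Module R N] (x : R) : N →ₗ[R] N := x • LinearMap.id

abbrev kerE (N : Type) [AddCommGroup N] [Module R N] (x : R) := LinearMap.ker (mulE N x)
abbrev ranE (N : Type) [AddCommGroup N] [Module R N] (x : R) := LinearMap.range (mulE N x)
abbrev quoE (N : Type) [AddCommGroup N] [Module R N] (x : R) := N ⧸ ranE N x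

variable (I : Ideal R) {N : Type} [AddCommGroup N] [Module R N] (x : R)

lemma mulE_apply (m : N) : mulE N x m = x • m := rfl

/-- the two exact sequences -/
def toR (N : Type) [AddCommGroup N] [Module R N] (x : R) : N →ₗ[R] ranE N x :=
  (mulE N x).rangeRestrict

lemma toR_surj : Function.Surjective (toR N x) := LinearMap.surjective_rangeRestrict _

lemma ex1 : Function.Exact (kerE N x).subtype (toR N x) := by
  rw [LinearMap.exact_iff, Submodule.range_subtype, toR, LinearMap.ker_rangeRestrict]

lemma ex2 : Function.Exact (ranE N x).subtype (ranE N x).mkQ := by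
  rw [LinearMap.exact_iff, Submodule.range_subtype, Submodule.ker_mkQ]

lemma sub_inj (P : Submodule R N) : Function.Injective P.subtype := Subtype.val_injective

lemma Hm_sub_toR (n : ℕ) (z : locH I n N) :
    Hm I n (ranE N x).subtype (Hm I n (toR N x) z) = x • z := by
  rw [← Hm_comp]
  exact Hm_smul_id I n x z

/-- injectivity of the first map -/
lemma Hm_toR_inj (n : ℕ) (h : Subsingleton (locH I n (kerE N x))) (z : locH I n N)
    (hz : Hm I n (toR N x) z = 0) : z = 0 := by
  obtain ⟨a, rfl⟩ := lesm I _ _ (sub_inj _) (toR_surj x) (ex1 x) z hz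
  rw [h.elim a 0, map_zero]

lemma Hm_toR_surj (n : ℕ) (h : Subsingleton (locH I (n+1) (kerE N x))) :
    Function.Surjective (Hm I n (toR N x)) := by
  intro z
  obtain ⟨δ, h1, -, -⟩ := les I n _ _ (sub_inj _) (toR_surj x) (ex1 (N := N) x)
  exact h1 z (h.elim _ _)

lemma Hm_sub_inj (n : ℕ) (h : Subsingleton (locH I n (quoE N x))) (z : locH I (n+1) (ranE N x))
    (hz : Hm I (n+1) (ranE N x).subtype z = 0) : z = 0 := by
  obtain ⟨δ, -, -, h3⟩ := les I n _ _ (sub_inj _) (Submodule.mkQ_surjective _) (ex2 (N := N) x)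
  obtain ⟨a, rfl⟩ := h3 z hz
  rw [h.elim a 0, map_zero]

lemma Hm_sub_surj (n : ℕ) (h : Subsingleton (locH I n (quoE N x))) :
    Function.Surjective (Hm I n (ranE N x).subtype) := by
  intro z
  exact lesm I _ _ (sub_inj _) (Submodule.mkQ_surjective _) (ex2 (N := N) x) z (h.elim _ _)

lemma ann_tail {k : ℕ} {x : Fin (k+1) → R} {A B : Ideal R} (hI : I ≤ (Ideal.span (Set.range x) ⊔ A).radical)
    (h1 : A ≤ B) (h2 : x 0 ∈ B) : I ≤ (Ideal.span (Set.range (Fin.tail x)) ⊔ B).radical := by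
  refine hI.trans (Ideal.radical_mono (sup_le ?_ (h1.trans le_sup_right)))
  rw [Ideal.span_le]
  rintro _ ⟨j, rfl⟩
  refine Fin.cases ?_ (fun j => ?_) j
  · exact Ideal.mem_sup_right h2
  · exact Ideal.mem_sup_left (Ideal.subset_span ⟨j, rfl⟩)

lemma ann_kerE : Module.annihilator R N ≤ Module.annihilator R (kerE N x) :=
  LinearMap.annihilator_le_of_injective _ (sub_inj _)

lemma ann_quoE : Module.annihilator R N ≤ Module.annihilator R (quoE N x) :=
  LinearMap.annihilator_le_of_surjective _ (Submodule.mkQ_surjective _)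

lemma mem_ann_kerE : x ∈ Module.annihilator R (kerE N x) := by
  rw [Module.mem_annihilator]
  rintro ⟨m, hm⟩
  exact Subtype.ext hm

lemma mem_ann_quoE : x ∈ Module.annihilator R (quoE N x) := by
  rw [Module.mem_annihilator]
  intro m
  obtain ⟨m, rfl⟩ := Submodule.mkQ_surjective _ m
  rw [← map_smul, Submodule.mkQ_apply, Submodule.Quotient.mk_eq_zero]
  exact ⟨m, rfl⟩

variable [IsNoetherianRing R]

lemma pow_le_of_le_rad {I A : Ideal R} (h : I ≤ A.radical) : ∃ t : ℕ, I ^ t ≤ A :=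
  Ideal.exists_pow_le_of_le_radical_of_fg h (IsNoetherian.noetherian I)

lemma tors_of_rad {x : Fin 0 → R}
    (h : I ≤ (Ideal.span (Set.range x) ⊔ Module.annihilator R N).radical) :
    IsTors I N := by
  have e : Set.range x = ∅ := by simp
  rw [e, Ideal.span_empty, bot_sup_eq] at h
  obtain ⟨t, ht⟩ := pow_le_of_le_rad h
  exact fun m => ⟨t, fun r hr => Module.mem_annihilator.1 (ht hr) m⟩

lemma V_vanish (k : ℕ) : ∀ (N : Type) [AddCommGroup N] [Module R N] (x : Fin k → R),
    (∀ j, x j ∈ I) → I ≤ (Ideal.span (Set.range x) ⊔ Module.annihilator R N).radical →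
    ∀ i, k < i → Subsingleton (locH I i N) := by
  induction k with
  | zero =>
    intro N _ _ x hx hI i hi
    obtain ⟨i, rfl⟩ := Nat.exists_eq_succ_of_ne_zero hi.ne'
    exact tors_vanish I i N (tors_of_rad I hI)
  | succ k ih =>
    intro N _ _ x hx hI i hi
    obtain ⟨i, rfl⟩ := Nat.exists_eq_succ_of_ne_zero (by omega : i ≠ 0)
    have hK := ih (kerE N (x 0)) (Fin.tail x) (fun j => hx _)
      (ann_tail I hI (ann_kerE _) (mem_ann_kerE _)) (i+1) (by omega)
    have hQ := ih (quoE N (x 0)) (Fin.tail x) (fun j => hx _)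
      (ann_tail I hI (ann_quoE _) (mem_ann_quoE _)) i (by omega)
    have hinj : ∀ z : locH I (i+1) N, x 0 • z = 0 → z = 0 := by
      intro z hz
      apply Hm_toR_inj I (x 0) _ hK
      apply Hm_sub_inj I (x 0) _ hQ
      rw [Hm_sub_toR, hz]
    have hinj' : ∀ t : ℕ, ∀ z : locH I (i+1) N, x 0 ^ t • z = 0 → z = 0 := by
      intro t
      induction t with
      | zero => intro z hz; simpa using hz
      | succ t iht =>
        intro z hz
        rw [pow_succ, mul_smul] at hz
        exact hinj _ (iht _ hz)
    refine subsingleton_of_forall_eq 0 fun z => ?_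
    obtain ⟨t, ht⟩ := H_tors I z
    exact hinj' t z (ht _ (Ideal.pow_mem_pow (hx 0) t))

lemma V_surj (k : ℕ) (N : Type) [AddCommGroup N] [Module R N] (x : Fin (k+1) → R)
    (hx : ∀ j, x j ∈ I) (hI : I ≤ (Ideal.span (Set.range x) ⊔ Module.annihilator R N).radical)
    (z : locH I (k+1) N) : ∃ w : locH I (k+1) N, x 0 • w = z := by
  have hK := V_vanish I k (kerE N (x 0)) (Fin.tail x) (fun j => hx _)
      (ann_tail I hI (ann_kerE _) (mem_ann_kerE _)) (k+2) (by omega)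
  have hQ := V_vanish I k (quoE N (x 0)) (Fin.tail x) (fun j => hx _)
      (ann_tail I hI (ann_quoE _) (mem_ann_quoE _)) (k+1) (by omega)
  obtain ⟨y, rfl⟩ := Hm_sub_surj I (x 0) _ hQ z
  obtain ⟨w, rfl⟩ := Hm_toR_surj I (x 0) _ hK y
  exact ⟨w, (Hm_sub_toR I (x 0) _ w).symm⟩

lemma top_not_fg (hjac : I ≤ (⊥ : Ideal R).jacobson) (k : ℕ) (N : Type) [AddCommGroup N]
    [Module R N] (x : Fin (k+1) → R)
    (hx : ∀ j, x j ∈ I) (hI : I ≤ (Ideal.span (Set.range x) ⊔ Module.annihilator R N).radical)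
    (hfin : Module.Finite R (locH I (k+1) N)) : Subsingleton (locH I (k+1) N) := by
  have : (⊤ : Submodule R (locH I (k+1) N)) = ⊥ := by
    apply Submodule.eq_bot_of_le_smul_of_le_jacobson_bot I _ hfin.fg_top _ hjac
    intro z _
    obtain ⟨w, rfl⟩ := V_surj I k N x hx hI z
    exact Submodule.smul_mem_smul (hx 0) trivial
  exact (Submodule.subsingleton_iff R).1 (subsingleton_of_bot_eq_top this.symm)
end
end PartF

section PartG
section
variable (I : Ideal R) {M : Type} [AddCommGroup M] [Module R M]

lemma pSpan_zero {c : ℕ} (x : Fin (c+1) → R) : pSpan M x 0 = ⊥ := by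
  have : {j : Fin (c+1) | j < 0} = ∅ := by ext j; simp
  rw [pSpan, this]
  simp

lemma mem_pSpan_succ {c : ℕ} (x : Fin (c+1) → R) (j : Fin c) (m : M) :
    m ∈ pSpan M x j.succ ↔
      (ranE M (x 0)).mkQ m ∈ pSpan (quoE M (x 0)) (Fin.tail x) j := by
  have h1 : x '' {i | i < j.succ} = insert (x 0) (Fin.tail x '' {i | i < j}) := by
    ext r
    constructor
    · rintro ⟨i, hi, rfl⟩
      revert hi
      refine Fin.cases ?_ (fun i => ?_) i
      · intro _
        exact Set.mem_insert _ _
      · intro hi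
        exact Set.mem_insert_of_mem _ ⟨i, Fin.succ_lt_succ_iff.1 hi, rfl⟩
    · rintro (rfl | ⟨i, hi, rfl⟩)
      · exact ⟨0, Fin.succ_pos _, rfl⟩
      · exact ⟨i.succ, Fin.succ_lt_succ_iff.2 hi, rfl⟩
  have h2 : Ideal.span {x 0} • (⊤ : Submodule R M) = ranE M (x 0) := by
    apply le_antisymm
    · rw [Submodule.smul_le]
      intro r hr m _
      obtain ⟨a, rfl⟩ := Ideal.mem_span_singleton'.1 hr
      exact ⟨a • m, by rw [mulE_apply, mul_comm, mul_smul]⟩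
    · rintro _ ⟨m, rfl⟩
      exact Submodule.smul_mem_smul (Ideal.mem_span_singleton_self _) trivial
  have h3 : pSpan M x j.succ = ranE M (x 0) ⊔ Ideal.span (Fin.tail x '' {i | i < j}) • ⊤ := by
    rw [pSpan, h1, Ideal.span_insert, Submodule.sup_smul, h2]
  have h4 : pSpan (quoE M (x 0)) (Fin.tail x) j =
      (Ideal.span (Fin.tail x '' {i | i < j}) • (⊤ : Submodule R M)).map (ranE M (x 0)).mkQ := by
    rw [Submodule.map_smul'', Submodule.map_top, Submodule.range_mkQ, pSpan]
  rw [h3, h4, ← Submodule.mem_comap, Submodule.comap_map_mkQ]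

lemma weak_iff (J : Ideal R) {c : ℕ} (x : Fin (c+1) → R) : IsWeakSeq J M x ↔
    (∀ m : M, x 0 • m = 0 → ∀ a ∈ J, a • m = 0) ∧
      IsWeakSeq J (quoE M (x 0)) (Fin.tail x) := by
  constructor
  · intro h
    refine ⟨fun m hm a ha => ?_, fun i m hm a ha => ?_⟩
    · have := h 0 m (by rw [hm]; exact zero_mem _) a ha
      rwa [pSpan_zero, Submodule.mem_bot] at this
    · obtain ⟨m, rfl⟩ := Submodule.mkQ_surjective _ m
      rw [← map_smul, ← mem_pSpan_succ]
      refine h _ m ?_ a ha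
      rw [mem_pSpan_succ]
      exact hm
  · rintro ⟨h1, h2⟩ i
    refine Fin.cases ?_ (fun i => ?_) i
    · intro m hm a ha
      rw [pSpan_zero, Submodule.mem_bot] at hm ⊢
      exact h1 m hm a ha
    · intro m hm a ha
      rw [mem_pSpan_succ] at hm ⊢
      exact h2 i ((ranE M (x 0)).mkQ m) hm a ha

variable [IsNoetherianRing R]

lemma weak_fg (ℓ : ℕ) (c : ℕ) : ∀ (M : Type) [AddCommGroup M] [Module R M] [Module.Finite R M]
    (x : Fin c → R), (∀ j, x j ∈ I) →
    (∀ n : Fin c → ℕ, (∀ j, 0 < n j) → IsWeakSeq (I ^ ℓ) M (fun j => x j ^ n j)) →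
    ∀ i, i < c → (∀ r ∈ I ^ ℓ, ∀ z : locH I i M, r • z = 0) ∧ Module.Finite R (locH I i M) := by
  induction c with
  | zero => intro M _ _ _ x _ _ i hi; omega
  | succ c ih =>
    intro M _ _ _ x hx hw i hi
    have hk : ∀ n : ℕ, 0 < n → ∀ m : M, x 0 ^ n • m = 0 → ∀ a ∈ I ^ ℓ, a • m = 0 := by
      intro n hn
      exact ((weak_iff _ _).1 (hw (fun _ => n) (fun _ => hn))).1
    have hq : ∀ n : ℕ, 0 < n → ∀ i, i < c → (∀ r ∈ I ^ ℓ, ∀ z : locH I i (quoE M (x 0 ^ n)), r • z = 0)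
        ∧ Module.Finite R (locH I i (quoE M (x 0 ^ n))) := by
      intro n hn
      refine ih (quoE M (x 0 ^ n)) (Fin.tail x) (fun j => hx _) ?_
      intro n' hn'
      refine ((weak_iff _ _).1 (hw (Fin.cons n n') ?_)).2
      intro j
      refine Fin.cases hn hn' j
    have : IsNoetherian R M := inferInstance
    obtain _ | i := i
    · constructor
      · intro r hr z
        apply jH_inj
        obtain ⟨t, ht⟩ := jH_tors I z
        rw [map_smul, map_zero]
        refine hk (t+1) (Nat.succ_pos _) _ ?_ r hr
        exact ht _ (Ideal.pow_le_pow_right (Nat.le_succ t) (Ideal.pow_mem_pow (hx 0) _))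
      · exact Module.Finite.of_injective (jH I M) (jH_inj I)
    · have hK : ∀ n : ℕ, 0 < n → Subsingleton (locH I (i+1) (kerE M (x 0 ^ n))) := by
        intro n hn
        apply tors_vanish
        rintro ⟨m, hm⟩
        exact ⟨ℓ, fun r hr => Subtype.ext (hk n hn m hm r hr)⟩
      have hkill : ∀ r ∈ I ^ ℓ, ∀ z : locH I (i+1) M, r • z = 0 := by
        intro r hr z
        obtain ⟨t, ht⟩ := H_tors I z
        have hz := ht _ (Ideal.pow_mem_pow (hx 0) _)
        have hz' : x 0 ^ (t+1) • z = 0 := by rw [pow_succ', mul_smul, hz, smul_zero]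
        apply Hm_toR_inj I (x 0 ^ (t+1)) _ (hK _ (Nat.succ_pos _))
        obtain ⟨δ, -, -, h3⟩ := les I i _ _ (sub_inj _) (Submodule.mkQ_surjective _)
          (ex2 (N := M) (x 0 ^ (t+1)))
        rw [← Hm_sub_toR] at hz'
        obtain ⟨a, ha⟩ := h3 _ hz'
        rw [map_smul, ← ha, ← map_smul, (hq (t+1) (Nat.succ_pos _) i (by omega)).1 r hr a, map_zero]
      refine ⟨hkill, ?_⟩
      obtain ⟨δ, -, -, h3⟩ := les I i _ _ (sub_inj _) (Submodule.mkQ_surjective _)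
          (ex2 (N := M) (x 0 ^ (ℓ+1)))
      have hfin := (hq (ℓ+1) (Nat.succ_pos _) i (by omega)).2
      have hmem : ∀ z, Hm I (i+1) (toR M (x 0 ^ (ℓ+1))) z ∈ LinearMap.range δ := by
        intro z
        apply h3
        rw [Hm_sub_toR]
        exact hkill _ (Ideal.pow_le_pow_right (Nat.le_succ ℓ) (Ideal.pow_mem_pow (hx 0) _)) z
      have : IsNoetherian R (LinearMap.range δ) := inferInstance
      refine Module.Finite.of_injective (LinearMap.codRestrict (LinearMap.range δ) _ hmem) ?_
      rw [injective_iff_map_eq_zero]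
      intro z hz
      apply Hm_toR_inj I (x 0 ^ (ℓ+1)) _ (hK _ (Nat.succ_pos _))
      exact congrArg Subtype.val hz
end
end PartG

section PartH
section
variable (I : Ideal R) {M : Type} [AddCommGroup M] [Module R M]

/-- a power of the ideal kills the module -/
def KillH (t i : ℕ) (M : Type) [AddCommGroup M] [Module R M] : Prop :=
  ∀ r ∈ I ^ t, ∀ z : locH I i M, r • z = 0

lemma coset_avoid (y : R) (A : Ideal R) (n : ℕ) : ∀ (S : Finset (Ideal R)), S.card = n →
    (∀ P ∈ S, P.IsPrime) →
    (∀ P ∈ S, y ∈ P → A ≤ P → False) → ∃ a ∈ A, ∀ P ∈ S, y + a ∉ P := by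
  classical
  induction n with
  | zero =>
    intro S hS _ _
    rw [Finset.card_eq_zero] at hS
    subst hS
    exact ⟨0, A.zero_mem, by simp⟩
  | succ n ih =>
    intro S hS hp hA
    have hne : S.Nonempty := Finset.card_pos.1 (by omega)
    obtain ⟨P, hP⟩ := S.exists_minimal hne
    have hPS := hP.1
    obtain ⟨a, ha, hav⟩ := ih (S.erase P) (by rw [Finset.card_erase_of_mem hPS]; omega)
      (fun Q hQ => hp Q (Finset.mem_of_mem_erase hQ))
      (fun Q hQ => hA Q (Finset.mem_of_mem_erase hQ))
    by_cases h : y + a ∈ P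
    · have hnot : ¬ (A ⊓ (S.erase P).inf id ≤ P) := by
        intro hle
        have := hp P hPS
        rcases (Ideal.IsPrime.inf_le this).1 hle with h1 | h1
        · exact hA P hPS (by simpa using P.sub_mem h (h1 ha)) h1
        · obtain ⟨Q, hQ, hQP⟩ := (Ideal.IsPrime.inf_le' this).1 h1
          have := hP.2 (Finset.mem_of_mem_erase hQ) hQP
          exact (Finset.ne_of_mem_erase hQ) (le_antisymm hQP this)
      obtain ⟨b, hb, hbP⟩ := Set.not_subset.1 hnot
      refine ⟨a + b, A.add_mem ha hb.1, fun Q hQ hmem => ?_⟩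
      by_cases hQP : Q = P
      · subst hQP
        rw [← add_assoc] at hmem
        exact hbP ((Submodule.add_mem_iff_right _ h).1 hmem)
      · have hQ' := Finset.mem_erase.2 ⟨hQP, hQ⟩
        have hbQ : b ∈ Q := (Finset.inf_le hQ' : (S.erase P).inf id ≤ id Q) hb.2
        rw [← add_assoc] at hmem
        exact hav Q hQ' ((Submodule.add_mem_iff_left _ hbQ).1 hmem)
    · refine ⟨a, ha, fun Q hQ => ?_⟩
      by_cases hQP : Q = P
      · subst hQP; exact h
      · exact hav Q (Finset.mem_erase.2 ⟨hQP, hQ⟩)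

lemma kill_mem_gam {t : ℕ} (h : KillH I t 0 M) (m : M) (hm : m ∈ gam I M) (r : R) (hr : r ∈ I ^ t) :
    r • m = 0 := by
  obtain ⟨s, hs⟩ := hm
  obtain ⟨z, rfl⟩ := jH_range I m s hs
  rw [← map_smul, h r hr z, map_zero]

variable [IsNoetherianRing R]

lemma kill_ranE {t i : ℕ} (y : R) (hK : IsTors I (kerE M y)) (h : KillH I t i M) :
    KillH I t i (ranE M y) := by
  intro r hr z
  obtain ⟨w, rfl⟩ := Hm_toR_surj I y i (tors_vanish I i _ hK) z
  rw [← map_smul, h r hr w, map_zero]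

lemma kill_quoE {t i : ℕ} (y : R) (hK : IsTors I (kerE M y)) (h : KillH I t i M)
    (h' : KillH I t (i+1) M) : KillH I (t+t) i (quoE M y) := by
  intro r hr z
  obtain ⟨δ, h1, -, -⟩ := les I i _ _ (sub_inj _) (Submodule.mkQ_surjective _) (ex2 (N := M) y)
  rw [pow_add] at hr
  refine Submodule.mul_induction_on hr (fun r hr s hs => ?_) (fun a b ha hb => ?_)
  · obtain ⟨b, hb⟩ := h1 (s • z) (by rw [map_smul, kill_ranE I y hK h' s hs])
    rw [mul_smul, ← hb, ← map_smul, h r hr, map_zero]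
  · rw [add_smul, ha, hb, add_zero]

/-- the case without torsion -/
lemma F_reg (hjac : I ≤ (⊥ : Ideal R).jacobson) (k t : ℕ)
    (ih : ∀ (M : Type) [AddCommGroup M] [Module R M] [Module.Finite R M],
      (∀ i, i ≤ k → KillH I (t+t) i M) → ∀ (N : Submodule R M) (y : Fin k → R), (∀ j, y j ∈ I) →
      I ≤ (Ideal.span (Set.range y) ⊔ Module.annihilator R N).radical → IsTors I N)
    (M : Type) [AddCommGroup M] [Module R M] [Module.Finite R M]
    (hM : ∀ i, i ≤ k+1 → KillH I t i M) (hg : gam I M = ⊥)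
    (N : Submodule R M) (y : Fin (k+1) → R) (hy : ∀ j, y j ∈ I)
    (hI : I ≤ (Ideal.span (Set.range y) ⊔ Module.annihilator R N).radical) : N = ⊥ := by
  set A := Ideal.span (Set.range (Fin.tail y)) ⊔ (I ⊓ Module.annihilator R N) with hA
  have hAI : A ≤ I := by
    refine sup_le ?_ inf_le_left
    rw [Ideal.span_le]
    rintro _ ⟨j, rfl⟩
    exact hy _
  have hass : ∀ P ∈ associatedPrimes R M, ¬ I ≤ P := by
    intro P hP hIP
    obtain ⟨hp, m, rfl⟩ := isAssociatedPrime_iff.1 hP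
    have hm : m ∈ gam I M := by
      refine ⟨1, fun r hr => ?_⟩
      rw [pow_one] at hr
      simpa [Submodule.mem_colon_singleton] using hIP hr
    rw [hg, Submodule.mem_bot] at hm
    subst hm
    exact hp.ne_top ((Ideal.eq_top_iff_one _).2 (by simp [Submodule.mem_colon_singleton]))
  have hfin := associatedPrimes.finite R M
  obtain ⟨a, haA, hav⟩ := coset_avoid (y 0) A _ hfin.toFinset rfl
    (fun P hP => (hfin.mem_toFinset.1 hP).isPrime) (by
      intro P hP h0 hAP
      rw [Set.Finite.mem_toFinset] at hP
      have hp := hP.isPrime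
      apply hass P hP
      rcases (Ideal.IsPrime.inf_le hp).1 (le_sup_right.trans hAP) with h1 | h1
      · exact h1
      · refine hI.trans (hp.radical_le_iff.2 (sup_le ?_ h1))
        rw [Ideal.span_le]
        rintro _ ⟨j, rfl⟩
        refine Fin.cases h0 (fun j => ?_) j
        exact hAP (Ideal.mem_sup_left (Ideal.subset_span ⟨j, rfl⟩)))
  set w := y 0 + a with hw
  have hwI : w ∈ I := I.add_mem (hy 0) (hAI haA)
  have hreg : ∀ m : M, w • m = 0 → m = 0 := by
    intro m hm
    by_contra hne
    have : w ∈ ⋃ p ∈ associatedPrimes R M, (p : Set R) := by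
      rw [biUnion_associatedPrimes_eq_zero_divisors]
      exact ⟨m, hne, hm⟩
    simp only [Set.mem_iUnion] at this
    obtain ⟨P, hP, hwP⟩ := this
    exact hav P (hfin.mem_toFinset.2 hP) hwP
  have hregn : ∀ n : ℕ, ∀ m : M, w ^ n • m = 0 → m = 0 := by
    intro n
    induction n with
    | zero => intro m hm; simpa using hm
    | succ n ihn =>
      intro m hm
      rw [pow_succ, mul_smul] at hm
      exact hreg _ (ihn _ hm)
  have hker : ∀ n : ℕ, IsTors I (kerE M (w ^ n)) := by
    rintro n ⟨m, hm⟩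
    exact ⟨0, fun r _ => Subtype.ext (by simp [hregn n m hm])⟩
  have hmain : ∀ n : ℕ, 0 < n → ∀ m ∈ N, ∀ r ∈ I ^ t, r • m ∈ ranE M (w ^ n) := by
    intro n hn m hm r hr
    have htors : IsTors I (N.map (ranE M (w ^ n)).mkQ) := by
      refine ih (quoE M (w ^ n)) (fun i hi => kill_quoE I _ (hker n) (hM i (by omega))
        (hM (i+1) (by omega))) _ (Fin.tail y) (fun j => hy _) ?_
      have hann : Module.annihilator R N ≤
          Module.annihilator R (N.map (ranE M (w ^ n)).mkQ) := by
        intro s hs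
        rw [Module.mem_annihilator] at hs ⊢
        rintro ⟨_, m, hm, rfl⟩
        apply Subtype.ext
        have := congrArg Subtype.val (hs ⟨m, hm⟩)
        change s • (ranE M (w ^ n)).mkQ m = 0
        rw [← map_smul]
        change s • m = 0 at this
        rw [this, map_zero]
      have hwann : w ^ n ∈ Module.annihilator R (N.map (ranE M (w ^ n)).mkQ) := by
        rw [Module.mem_annihilator]
        rintro ⟨m, hm⟩
        exact Subtype.ext (Module.mem_annihilator.1 (mem_ann_quoE (N := M) (w ^ n)) m)
      set B := Ideal.span (Set.range (Fin.tail y)) ⊔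
        Module.annihilator R (N.map (ranE M (w ^ n)).mkQ) with hB
      have hAB : A ≤ B := sup_le_sup le_rfl (inf_le_right.trans hann)
      have hwB : w ∈ B.radical := ⟨n, Ideal.mem_sup_right hwann⟩
      have hy0 : y 0 ∈ B.radical := by
        have : y 0 = w - a := by rw [hw]; ring
        rw [this]
        exact sub_mem hwB (Ideal.le_radical (hAB haA))
      refine hI.trans ?_
      rw [Ideal.radical_le_radical_iff]
      refine sup_le ?_ (hann.trans (le_sup_right.trans Ideal.le_radical))
      rw [Ideal.span_le]
      rintro _ ⟨j, rfl⟩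
      refine Fin.cases hy0 (fun j => ?_) j
      exact Ideal.le_radical (Ideal.mem_sup_left (Ideal.subset_span ⟨j, rfl⟩))
    obtain ⟨s, hs⟩ := htors ⟨_, m, hm, rfl⟩
    obtain ⟨z, hz⟩ := jH_range I ((ranE M (w ^ n)).mkQ m) s
      (fun r hr => congrArg Subtype.val (hs r hr))
    obtain ⟨δ, h1, -, -⟩ := les I 0 _ _ (sub_inj _) (Submodule.mkQ_surjective _)
      (ex2 (N := M) (w ^ n))
    obtain ⟨b, hb⟩ := h1 (r • z) (by
      rw [map_smul, kill_ranE I _ (hker n) (hM 1 (by omega)) r hr])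
    have hb0 : jH I M b = 0 := by
      have : jH I M b ∈ gam I M := jH_tors I b
      rwa [hg, Submodule.mem_bot] at this
    rw [← Submodule.Quotient.mk_eq_zero, ← Submodule.mkQ_apply, map_smul, ← hz, ← map_smul, ← hb,
      jH_nat, hb0, map_zero]
  rw [eq_bot_iff, ← hg]
  intro m hm
  refine ⟨t, fun r hr => ?_⟩
  have hk := Ideal.iInf_pow_smul_eq_bot_of_le_jacobson (M := M) I hjac
  rw [← Submodule.mem_bot R, ← hk, Submodule.mem_iInf]
  intro n
  obtain ⟨v, hv⟩ := hmain (n+1) (Nat.succ_pos _) m hm r hr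
  rw [← hv, mulE_apply]
  exact Submodule.smul_mem_smul (Ideal.pow_le_pow_right (Nat.le_succ n) (Ideal.pow_mem_pow hwI _))
    trivial

lemma gam_quot [Module.Finite R M] : gam I (M ⧸ gam I M) = ⊥ := by
  rw [eq_bot_iff]
  rintro m ⟨s, hs⟩
  obtain ⟨m, rfl⟩ := Submodule.mkQ_surjective _ m
  obtain ⟨u, hu⟩ := fg_tors I (gam I M) (IsNoetherian.noetherian _) (fun m hm => hm)
  rw [Submodule.mem_bot, Submodule.mkQ_apply, Submodule.Quotient.mk_eq_zero]
  refine ⟨u + s, fun r hr => ?_⟩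
  rw [pow_add] at hr
  refine Submodule.mul_induction_on hr (fun r hr q hq => ?_) (fun a b ha hb => ?_)
  · rw [mul_smul]
    apply hu r hr
    rw [← Submodule.Quotient.mk_eq_zero, ← Submodule.mkQ_apply, map_smul]
    exact hs q hq
  · rw [add_smul, ha, hb, add_zero]

lemma kill_gam_quot [Module.Finite R M] {t i : ℕ} (h : KillH I t i M) :
    KillH I t i (M ⧸ gam I M) := by
  intro r hr z
  have hs := tors_vanish I i _ (gam_tors I (N := M))
  obtain ⟨δ, h1, -, -⟩ := les I i (gam I M).subtype (gam I M).mkQ (sub_inj _)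
    (Submodule.mkQ_surjective _)
    (by rw [LinearMap.exact_iff, Submodule.range_subtype, Submodule.ker_mkQ])
  obtain ⟨b, rfl⟩ := h1 z (hs.elim _ _)
  rw [← map_smul, h r hr, map_zero]

lemma claimF (hjac : I ≤ (⊥ : Ideal R).jacobson) (k : ℕ) : ∀ (t : ℕ) (M : Type)
    [AddCommGroup M] [Module R M] [Module.Finite R M],
      (∀ i, i ≤ k → KillH I t i M) → ∀ (N : Submodule R M) (y : Fin k → R), (∀ j, y j ∈ I) →
      I ≤ (Ideal.span (Set.range y) ⊔ Module.annihilator R N).radical → IsTors I N := by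
  induction k with
  | zero =>
    intro t M _ _ _ hM N y hy hI
    exact tors_of_rad I hI
  | succ k ih =>
    intro t M _ _ _ hM N y hy hI
    have h0 : N.map (gam I M).mkQ = ⊥ := by
      refine F_reg I hjac k t (ih (t+t)) (M ⧸ gam I M) (fun i hi => kill_gam_quot I (hM i hi))
        (gam_quot I) _ y hy (hI.trans (Ideal.radical_mono (sup_le_sup le_rfl ?_)))
      intro s hs
      rw [Module.mem_annihilator] at hs ⊢
      rintro ⟨_, m, hm, rfl⟩
      apply Subtype.ext
      have := congrArg Subtype.val (hs ⟨m, hm⟩)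
      change s • (gam I M).mkQ m = 0
      rw [← map_smul]
      change s • m = 0 at this
      rw [this, map_zero]
    rintro ⟨m, hm⟩
    have : (gam I M).mkQ m ∈ N.map (gam I M).mkQ := ⟨m, hm, rfl⟩
    rw [h0, Submodule.mem_bot, Submodule.mkQ_apply, Submodule.Quotient.mk_eq_zero] at this
    obtain ⟨s, hs⟩ := this
    exact ⟨s, fun r hr => Subtype.ext (hs r hr)⟩

lemma fg_weak (hjac : I ≤ (⊥ : Ideal R).jacobson) (c : ℕ) : ∀ (t : ℕ) (M : Type)
    [AddCommGroup M] [Module R M] [Module.Finite R M], (∀ i, i < c → KillH I t i M) →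
    ∀ x : Fin c → R, (∀ j, x j ∈ I) →
    I ≤ (Ideal.span (Set.range x) ⊔ Module.annihilator R M).radical →
    IsWeakSeq (I ^ (2 ^ c * t)) M x := by
  induction c with
  | zero => intro t M _ _ _ hM x hx hI i; exact i.elim0
  | succ c ih =>
    intro t M _ _ _ hM x hx hI
    have hK : IsTors I (kerE M (x 0)) := claimF I hjac c t M (fun i hi => hM i (by omega)) _
      (Fin.tail x) (fun j => hx _) (ann_tail I hI (ann_kerE _) (mem_ann_kerE _))
    rw [weak_iff]
    constructor
    · intro m hm a ha
      obtain ⟨s, hs⟩ := hK ⟨m, hm⟩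
      refine kill_mem_gam I (hM 0 (by omega)) m ⟨s, fun r hr => congrArg Subtype.val (hs r hr)⟩ a ?_
      exact Ideal.pow_le_pow_right (Nat.le_mul_of_pos_left _ (by positivity)) ha
    · have e : 2 ^ (c+1) * t = 2 ^ c * (t + t) := by ring
      rw [e]
      exact ih (t+t) (quoE M (x 0)) (fun i hi => kill_quoE I _ hK (hM i (by omega))
        (hM (i+1) (by omega))) (Fin.tail x) (fun j => hx _)
        (ann_tail I hI (ann_quoE _) (mem_ann_quoE _))
end
end PartH

section PartK
section
variable {I : Ideal R} {M : Type} [AddCommGroup M] [Module R M]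

lemma IsRsop.le_rad {c : ℕ} {x : Fin c → R} (h : IsRsop I M x) :
    I ≤ (Ideal.span (Set.range x) ⊔ Module.annihilator R M).radical := by
  have h2 := h.2
  rw [Ideal.add_eq_sup, Ideal.add_eq_sup] at h2
  rw [h2]
  exact le_sup_left.trans Ideal.le_radical

lemma isRsop_of_le {c : ℕ} {x : Fin c → R} (hx : ∀ j, x j ∈ I)
    (h : I ≤ (Ideal.span (Set.range x) ⊔ Module.annihilator R M).radical) : IsRsop I M x := by
  refine ⟨hx, ?_⟩
  rw [Ideal.add_eq_sup, Ideal.add_eq_sup]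
  apply le_antisymm
  · apply Ideal.radical_mono
    refine sup_le_sup ?_ le_rfl
    rw [Ideal.span_le]
    rintro _ ⟨j, rfl⟩
    exact hx j
  · rw [Ideal.radical_le_radical_iff]
    exact sup_le h (le_sup_right.trans Ideal.le_radical)

lemma IsRsop.pow {c : ℕ} {x : Fin c → R} (h : IsRsop I M x) (n : Fin c → ℕ) (hn : ∀ j, 0 < n j) :
    IsRsop I M (fun j => x j ^ n j) := by
  refine isRsop_of_le (fun j => Ideal.pow_mem_of_mem _ (h.1 j) _ (hn j)) (h.le_rad.trans ?_)
  rw [Ideal.radical_le_radical_iff]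
  refine sup_le ?_ (le_sup_right.trans Ideal.le_radical)
  rw [Ideal.span_le]
  rintro _ ⟨j, rfl⟩
  exact ⟨n j, Ideal.mem_sup_left (Ideal.subset_span ⟨j, rfl⟩)⟩

lemma exists_rsop {c : ℕ} (ha : IsAra I M c) : ∃ x : Fin c → R, IsRsop I M x := by
  obtain ⟨x, hx⟩ := ha.1
  rw [Ideal.add_eq_sup, Ideal.add_eq_sup] at hx
  have hmem : ∀ j, ∃ (n : ℕ) (a : R), a ∈ I ∧ ∃ b ∈ Module.annihilator R M, a + b = x j ^ n := by
    intro j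
    have : x j ∈ (I ⊔ Module.annihilator R M).radical := by
      rw [← hx]
      exact Ideal.le_radical (Ideal.mem_sup_left (Ideal.subset_span ⟨j, rfl⟩))
    obtain ⟨n, hn⟩ := this
    obtain ⟨a, ha, b, hb, hab⟩ := Submodule.mem_sup.1 hn
    exact ⟨n, a, ha, b, hb, hab⟩
  choose n a ha b hb hab using hmem
  refine ⟨a, isRsop_of_le ha ?_⟩
  refine (le_sup_left.trans Ideal.le_radical).trans (hx.symm.le.trans ?_)
  rw [Ideal.radical_le_radical_iff]
  refine sup_le ?_ (le_sup_right.trans Ideal.le_radical)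
  rw [Ideal.span_le]
  rintro _ ⟨j, rfl⟩
  refine ⟨n j, ?_⟩
  rw [← hab j]
  exact add_mem (Ideal.mem_sup_left (Ideal.subset_span ⟨j, rfl⟩)) (Ideal.mem_sup_right (hb j))
end
end PartK

/-- **Proposition 3.5.** Suppose `I` is contained in the Jacobson radical of `R` and
`cd(I,M) = ara(I,M)`. Then `M` is `I`-relative generalized Cohen-Macaulay if and only if
there is an `ℓ` such that every `I`-relative system of parameters of `M` is an `I^ℓ`-weak
sequence on `M`. -/
theorem proposition_3_5 [IsNoetherianRing R] (I : Ideal R)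
    (hjac : I ≤ (⊥ : Ideal R).jacobson)
    (M : Type) [AddCommGroup M] [Module R M] [Module.Finite R M]
    (c : ℕ) (hc : IsCd I M c) (ha : IsAra I M c) :
    IsRelGCM I M ↔
      ∃ ℓ : ℕ, ∀ x : Fin c → R, IsRsop I M x → IsWeakSeq (I ^ ℓ) M x := by
  obtain _ | c := c
  · exact ⟨fun _ => ⟨0, fun x _ i => i.elim0⟩, fun _ => Or.inl hc.2⟩
  constructor
  · intro h
    have hfg : ∀ i, i < c + 1 → Module.Finite R (locH I i M) := by
      rcases h with h | ⟨d, hd, hf⟩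
      · exact absurd (h (c+1) (Nat.succ_pos _)) (not_subsingleton_iff_nontrivial.2 hc.1)
      · have : d = c + 1 := by
          rcases lt_trichotomy d (c+1) with h1 | h1 | h1
          · exact absurd (hd.2 _ h1) (not_subsingleton_iff_nontrivial.2 hc.1)
          · exact h1
          · exact absurd (hc.2 _ h1) (not_subsingleton_iff_nontrivial.2 hd.1)
        subst this
        exact hf.1
    have hk : ∀ i, ∃ t, i < c + 1 → KillH I t i M := by
      intro i
      by_cases hi : i < c + 1
      · have := hfg i hi
        obtain ⟨t, ht⟩ := fg_tors I (⊤ : Submodule R (locH I i M)) Module.Finite.fg_top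
          (fun m _ => H_tors I m)
        exact ⟨t, fun _ r hr z => ht r hr z trivial⟩
      · exact ⟨0, fun h => absurd h hi⟩
    choose t ht using hk
    refine ⟨2 ^ (c+1) * (Finset.range (c+1)).sup t, fun x hx => ?_⟩
    refine fg_weak I hjac (c+1) _ M (fun i hi r hr z => ?_) x hx.1 hx.le_rad
    exact ht i hi r (Ideal.pow_le_pow_right
      (Finset.le_sup (f := t) (Finset.mem_range.2 hi)) hr) z
  · rintro ⟨ℓ, h⟩
    obtain ⟨x, hx⟩ := exists_rsop ha
    refine Or.inr ⟨c+1, hc, fun i hi => ?_, fun hfin => ?_⟩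
    · exact (weak_fg I ℓ (c+1) M x hx.1 (fun n hn => h _ (hx.pow n hn)) i hi).2
    · have := top_not_fg I hjac c M x hx.1 hx.le_rad hfin
      exact not_subsingleton_iff_nontrivial.2 hc.1 this
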